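/- arXiv:1401.5022 — 3 statements merged into one kernel-verified Lean document; each statement's English description precedes it below -/
import Mathlib

section
/- Let T > 0, x0 ∈ ℝ, K = [−1,1], and let c, q : ℝ → ℝ be Lipschitz functions satisfying q(x)·(q(x) − c(x)) > 0 for every x ∈ ℝ. Then the optimal control problem 'minimize ∫₀ᵀ [c(x(t)) u(t) + u(t)²] dt over admissible pairs for the state equation x′(t) = q(x(t)) u(t) + u(t)²' admits at least one solution. -/
open MeasureTheory

open Filter Function Metric Set Topology
open scoped NNReal

/-!
Adjoin the accumulated cost to the state. Along a minimizing sequence the extended curves are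
equi-Lipschitz (Grönwall), hence converge pointwise along an ultrafilter to a Lipschitz curve.
Difference quotients of the extended curves are averages of extended velocities, so at almost every
time the derivative of the limit lies in the closed convex hull of the extended velocities available
at the limit state (Filippov's closure argument). Existence follows as soon as every point of that
hull is dominated, same velocity and no larger cost, by a control depending measurably on state and
velocity.

In the scalar problem the hull at `x` consists of the points `(q m + s, c m + s)` with
`m ^ 2 ≤ s ≤ 1`, where `q = q x` and `c = c x`. A root `u` of `q u + u ^ 2 = q m + s` satisfies
`c u + u ^ 2 - (c m + s) = -(q - c) (u - m)`, and the two roots lie on either side of `m`. The sign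
condition on `q (q - c)` says that the root on the favourable side is the one lying in `[-1, 1]`.
-/

section Curves

variable {F : Type*} [NormedAddCommGroup F] [NormedSpace ℝ F]

theorem intervalIntegrable_of_lipschitzOnWith_of_ae_hasDerivAt [CompleteSpace F]
    {f f' : ℝ → F} {L : ℝ≥0} {a b : ℝ} (hab : a ≤ b) (hf : LipschitzOnWith L f (Icc a b))
    (hf' : ∀ᵐ t ∂volume.restrict (Ioo a b), HasDerivAt f (f' t) t) :
    IntervalIntegrable f' volume a b := by
  rw [intervalIntegrable_iff_integrableOn_Ioo_of_le hab]
  have hderiv : deriv f =ᵐ[volume.restrict (Ioo a b)] f' := hf'.mono fun t ht => ht.deriv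
  refine Integrable.of_bound (C := L)
    ((stronglyMeasurable_deriv f).aestronglyMeasurable.congr hderiv) ?_
  filter_upwards [hf', ae_restrict_mem measurableSet_Ioo] with t ht htab
  exact ht.le_of_lipschitzOn (Icc_mem_nhds htab.1 htab.2) hf

theorem integral_eq_sub_of_lipschitzOnWith_of_ae_hasDerivAt [CompleteSpace F] {f f' : ℝ → F}
    {L : ℝ≥0} {a b : ℝ} (hab : a ≤ b) (hf : LipschitzOnWith L f (Icc a b))
    (hf' : ∀ᵐ t ∂volume.restrict (Ioo a b), HasDerivAt f (f' t) t) :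
    ∫ t in a..b, f' t = f b - f a := by
  have hint := intervalIntegrable_of_lipschitzOnWith_of_ae_hasDerivAt hab hf hf'
  refine (SeparatingDual.eq_iff_forall_dual_eq (R := ℝ)).2 fun ℓ => ?_
  have hac : AbsolutelyContinuousOnInterval (ℓ ∘ f) a b := by
    rw [← uIcc_of_le hab] at hf
    exact (ℓ.lipschitz.comp_lipschitzOnWith hf).absolutelyContinuousOnInterval
  rw [← ℓ.intervalIntegral_comp_comm hint, map_sub]
  refine Eq.trans ?_ hac.integral_deriv_eq_sub
  rw [intervalIntegral.integral_of_le hab, intervalIntegral.integral_of_le hab,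
    integral_Ioc_eq_integral_Ioo, integral_Ioc_eq_integral_Ioo]
  exact integral_congr_ae (hf'.mono fun t ht => (ℓ.hasFDerivAt.comp_hasDerivAt t ht).deriv.symm)

theorem lipschitzOnWith_of_sub_eq_integral {f f' : ℝ → F} {L : ℝ≥0} {a b : ℝ}
    (hf : ∀ s ∈ Icc a b, ∀ t ∈ Icc a b, s ≤ t → f t - f s = ∫ r in s..t, f' r)
    (hf' : ∀ᵐ t ∂volume.restrict (Ioo a b), ‖f' t‖ ≤ L) : LipschitzOnWith L f (Icc a b) := by
  rw [restrict_Ioo_eq_restrict_Icc, ae_restrict_iff' measurableSet_Icc] at hf'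
  have hle : ∀ s ∈ Icc a b, ∀ t ∈ Icc a b, s ≤ t → dist (f s) (f t) ≤ L * dist s t := by
    intro s hs t ht hst
    rw [dist_comm, dist_eq_norm, hf s hs t ht hst, dist_comm, Real.dist_eq]
    refine intervalIntegral.norm_integral_le_of_norm_le_const_ae ?_
    filter_upwards [hf'] with r hr hrst
    rw [uIoc_of_le hst] at hrst
    exact hr ⟨hs.1.trans hrst.1.le, hrst.2.trans ht.2⟩
  refine LipschitzOnWith.of_dist_le_mul fun s hs t ht => ?_
  rcases le_total s t with hst | hts
  · exact hle s hs t ht hst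
  · rw [dist_comm (f s), dist_comm s]
    exact hle t ht s hs hts

theorem le_gronwallBound_of_le_integral {v : ℝ → ℝ} {δ K ε a b : ℝ} (hK : 0 ≤ K)
    (hv : ContinuousOn v (Icc a b))
    (h : ∀ t ∈ Icc a b, v t ≤ δ + ∫ s in a..t, (K * v s + ε)) :
    ∀ t ∈ Icc a b, v t ≤ gronwallBound δ K ε (t - a) := by
  rcases lt_or_ge b a with hba | hab
  · simp [Icc_eq_empty_of_lt hba]
  have hcont : ContinuousOn (fun s => K * v s + ε) (Icc a b) := by fun_prop
  have hint : IntegrableOn (fun s => K * v s + ε) (Icc a b) :=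
    hcont.integrableOn_compact isCompact_Icc
  set G : ℝ → ℝ := fun t => δ + ∫ s in a..t, (K * v s + ε) with hG
  have hGcont : ContinuousOn G (Icc a b) := by
    rw [← uIcc_of_le hab] at hint ⊢
    exact continuousOn_const.add (intervalIntegral.continuousOn_primitive_interval hint)
  have hGderiv : ∀ t ∈ Ico a b, HasDerivWithinAt G (K * v t + ε) (Ici t) t := by
    intro t ht
    have hnhds : Icc a b ∈ 𝓝[>] t := Icc_mem_nhdsGT_of_mem ht
    have hmeas : StronglyMeasurableAtFilter (fun s => K * v s + ε) (𝓝[>] t) :=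
      ⟨Icc a b, hnhds, hint.aestronglyMeasurable⟩
    refine (intervalIntegral.integral_hasDerivWithinAt_right ?_ hmeas ?_).const_add δ
    · rw [intervalIntegrable_iff_integrableOn_Icc_of_le ht.1]
      exact hint.mono_set (Icc_subset_Icc_right ht.2.le)
    · exact (hcont t (Ico_subset_Icc_self ht)).mono_of_mem_nhdsWithin hnhds
  intro t ht
  refine (h t ht).trans (le_gronwallBound_of_liminf_deriv_right_le hGcont
    (fun s hs r hr => (hGderiv s hs).liminf_right_slope_le hr) (by simp [hG]) (fun s hs => ?_) t ht)
  have := mul_le_mul_of_nonneg_left (h s (Ico_subset_Icc_self hs)) hK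
  linarith

theorem slope_mem_of_sub_eq_integral [CompleteSpace F] {A : Set F} (hA : Convex ℝ A)
    (hAc : IsClosed A) {f f' : ℝ → F} {a b : ℝ} (hab : a < b)
    (hint : IntervalIntegrable f' volume a b) (hf : f b - f a = ∫ t in a..b, f' t)
    (hf' : ∀ᵐ t ∂volume.restrict (Ioc a b), f' t ∈ A) : slope f a b ∈ A := by
  rw [slope, vsub_eq_sub, hf, ← interval_average_eq, uIoc_of_le hab.le]
  exact hA.set_average_mem hAc (by simpa using hab) measure_Ioc_lt_top.ne hf' hint.1

theorem hasDerivWithinAt_mem_of_tendsto_of_slope_mem {ι : Type*} {l : Filter ι} [l.NeBot]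
    {A : Set F} (hA : IsClosed A) {f : ι → ℝ → F} {g : ℝ → F} {g' : F} {t : ℝ}
    (hg : HasDerivWithinAt g g' (Ioi t) t) (hft : Tendsto (f · t) l (𝓝 (g t)))
    (hf : ∀ᶠ b in 𝓝[>] t, Tendsto (f · b) l (𝓝 (g b)))
    (hslope : ∀ ε > 0, ∀ᶠ b in 𝓝[>] t, ∀ᶠ n in l, slope (f n) t b ∈ cthickening ε A) :
    g' ∈ A := by
  rw [← hA.closure_eq, closure_eq_iInter_cthickening]
  refine mem_iInter₂.2 fun ε hε => isClosed_cthickening.mem_of_tendsto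
    ((hasDerivWithinAt_iff_tendsto_slope' self_notMem_Ioi).1 hg) ?_
  filter_upwards [hf, hslope ε hε] with b hfb hb
  exact isClosed_cthickening.mem_of_tendsto ((hfb.sub hft).const_smul _) hb

end Curves

theorem eventually_forall_mem_of_tendsto_of_lipschitzOnWith {ι X : Type*} [PseudoMetricSpace X]
    {l : Filter ι} {L : ℝ≥0} {f : ι → ℝ → X} {a b t : ℝ}
    (hf : ∀ n, LipschitzOnWith L (f n) (Icc a b)) (ht : t ∈ Ico a b) {y : X}
    (hft : Tendsto (f · t) l (𝓝 y)) {V : Set X} (hV : V ∈ 𝓝 y) :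
    ∀ᶠ c in 𝓝[>] t, ∀ᶠ n in l, ∀ s ∈ Icc t c, f n s ∈ V := by
  obtain ⟨r, hr, hrV⟩ := Metric.mem_nhds_iff.1 hV
  have hsmall : ∀ᶠ c in 𝓝[>] t, L * (c - t) < r / 2 := by
    have hcont : Continuous fun c : ℝ => L * (c - t) := by fun_prop
    refine nhdsWithin_le_nhds (hcont.tendsto t (gt_mem_nhds ?_))
    simpa using hr
  filter_upwards [hsmall, Ioc_mem_nhdsGT ht.2] with c hc hcb
  filter_upwards [hft (ball_mem_nhds y (half_pos hr))] with n hn s hs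
  refine hrV (mem_ball.2 ?_)
  have hst : dist (f n s) (f n t) ≤ L * (s - t) := by
    have := (hf n).dist_le_mul s ⟨ht.1.trans hs.1, hs.2.trans hcb.2⟩ t (Ico_subset_Icc_self ht)
    rwa [Real.dist_eq, abs_of_nonneg (sub_nonneg.2 hs.1)] at this
  calc dist (f n s) y ≤ dist (f n s) (f n t) + dist (f n t) y := dist_triangle _ _ _
    _ < r / 2 + r / 2 := add_lt_add_of_le_of_lt
      (hst.trans ((mul_le_mul_of_nonneg_left (by linarith [hs.2]) L.2).trans hc.le)) hn
    _ = r := add_halves r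

theorem exists_lipschitzWith_tendsto_ultrafilter {ι α X : Type*} [PseudoMetricSpace α]
    [PseudoMetricSpace X] [ProperSpace X] (l : Ultrafilter ι) {L : ℝ≥0} {f : ι → α → X}
    (hf : ∀ n, LipschitzWith L (f n)) {a : α} {x : X} {r : ℝ}
    (ha : ∀ n, f n a ∈ closedBall x r) :
    ∃ g : α → X, LipschitzWith L g ∧ ∀ t, Tendsto (f · t) l (𝓝 (g t)) := by
  have hlim : ∀ t, ∃ y, Tendsto (f · t) l (𝓝 y) := by
    intro t
    have hmem : ∀ n, f n t ∈ closedBall x (L * dist t a + r) := fun n =>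
      (dist_triangle _ (f n a) _).trans (add_le_add ((hf n).dist_le_mul t a) (ha n))
    obtain ⟨y, -, hy⟩ := (isCompact_closedBall x _).ultrafilter_le_nhds' (l.map (f · t))
      (Ultrafilter.mem_map.2 (univ_mem' hmem))
    exact ⟨y, hy⟩
  choose g hg using hlim
  exact ⟨g, LipschitzWith.of_dist_le_mul fun s t => le_of_tendsto ((hg s).dist (hg t))
    (Eventually.of_forall fun n => (hf n).dist_le_mul s t), hg⟩

theorem exists_lipschitzWith_tendsto_ultrafilter_Icc {ι X : Type*} [PseudoMetricSpace X]
    [ProperSpace X] (l : Ultrafilter ι) {L : ℝ≥0} {a b : ℝ} (hab : a ≤ b) {f : ι → ℝ → X}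
    (hf : ∀ n, LipschitzOnWith L (f n) (Icc a b)) {x : X} {r : ℝ}
    (ha : ∀ n, f n a ∈ closedBall x r) :
    ∃ g : ℝ → X, LipschitzWith L g ∧ ∀ t ∈ Icc a b, Tendsto (f · t) l (𝓝 (g t)) := by
  obtain ⟨g, hgL, hg⟩ := exists_lipschitzWith_tendsto_ultrafilter l
    (fun n => (lipschitzOnWith_iff_restrict.1 (hf n))) (a := ⟨a, left_mem_Icc.2 hab⟩) ha
  refine ⟨IccExtend hab g, ?_, fun t ht => ?_⟩
  · simpa only [mul_one, IccExtend] using hgL.comp (LipschitzWith.projIcc hab)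
  · simpa [IccExtend_of_mem hab g ht] using hg ⟨t, ht⟩

section ExtendedSystem

variable {E U : Type*}

/-- The cost `∫₀ᵀ g(x, u) dt` of the pair `(x, u)` for the running cost `g`. -/
noncomputable def cost (T : ℝ) (g : E → U → ℝ) (x : ℝ → E) (u : ℝ → U) : ℝ :=
  ∫ t in Ioo 0 T, g (x t) (u t)

/-- The state with the cost accumulated so far adjoined as an additional coordinate. -/
noncomputable def extendedState (g : E → U → ℝ) (x : ℝ → E) (u : ℝ → U) (t : ℝ) : E × ℝ :=
  (x t, ∫ s in 0..t, g (x s) (u s))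

/-- The velocity of the extended state for the dynamics `x' = f x u` and the running cost `g`. -/
def extendedVelocity (f : E → U → E) (g : E → U → ℝ) (x : E) (u : U) : E × ℝ :=
  (f x u, g x u)

theorem extendedState_snd_eq_cost {T : ℝ} (hT : 0 ≤ T) (g : E → U → ℝ) (x : ℝ → E) (u : ℝ → U) :
    (extendedState g x u T).2 = cost T g x u := by
  rw [extendedState, cost, intervalIntegral.integral_of_le hT, integral_Ioc_eq_integral_Ioo]

variable [NormedAddCommGroup E] [NormedSpace ℝ E]

/-- The extended velocities that relaxed (measure-valued) controls achieve at the state `x`. -/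
def relaxedVelocitySet (K : Set U) (f : E → U → E) (g : E → U → ℝ) (x : E) : Set (E × ℝ) :=
  closedConvexHull ℝ (extendedVelocity f g x '' K)

/-- A feedback `φ`, depending on the state and the velocity, which realizes every relaxed velocity
by an ordinary control at no larger running cost. -/
def IsDominatingSelection (K : Set U) (f : E → U → E) (g : E → U → ℝ) (φ : E → E → U) : Prop :=
  ∀ x, ∀ p ∈ relaxedVelocitySet K f g x,
    φ x p.1 ∈ K ∧ f x (φ x p.1) = p.1 ∧ g x (φ x p.1) ≤ p.2

variable [TopologicalSpace U] {K : Set U} {f : E → U → E} {g : E → U → ℝ}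

theorem eventually_extendedVelocity_mem_cthickening (hK : IsCompact K)
    (hf : Continuous (uncurry f)) (hg : Continuous (uncurry g)) (x : E) {ε : ℝ} (hε : 0 < ε) :
    ∀ᶠ y in 𝓝 x, ∀ v ∈ K,
      extendedVelocity f g y v ∈ cthickening ε (relaxedVelocitySet K f g x) := by
  obtain ⟨V, hV, hVK⟩ := hK.mem_uniformity_of_prod (f := extendedVelocity f g)
    (hf.prodMk hg).continuousOn (mem_univ x) (dist_mem_uniformity hε)
  rw [nhdsWithin_univ] at hV
  filter_upwards [hV] with y hy v hv
  exact mem_cthickening_of_dist_le _ _ _ _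
    (subset_closedConvexHull (mem_image_of_mem _ hv)) (hVK y hy v hv).le

end ExtendedSystem

section Admissible

variable {E U : Type*} [NormedAddCommGroup E] [NormedSpace ℝ E] [MeasurableSpace U]

/-- `(x, u)` is an admissible pair on `[0, T]` for the control system `x' = f x u`, `x 0 = x₀`,
with controls taking values in `K`. The values of `x` and `u` outside `[0, T]` are arbitrary. -/
structure IsAdmissible (T : ℝ) (x₀ : E) (K : Set U) (f : E → U → E) (x : ℝ → E) (u : ℝ → U) :
    Prop where
  measurable_control : Measurable u
  control_mem : ∀ᵐ t ∂volume.restrict (Ioo 0 T), u t ∈ K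
  lipschitzOnWith : ∃ L : ℝ≥0, LipschitzOnWith L x (Icc 0 T)
  init : x 0 = x₀
  hasDerivAt : ∀ᵐ t ∂volume.restrict (Ioo 0 T), HasDerivAt x (f (x t) (u t)) t

variable {T : ℝ} {x₀ : E} {K : Set U} {f : E → U → E} {g : E → U → ℝ} {C M : ℝ≥0}
  {x : ℝ → E} {u : ℝ → U}

theorem IsAdmissible.norm_le_gronwallBound [CompleteSpace E] (h : IsAdmissible T x₀ K f x u)
    (hC : ∀ y, ∀ v ∈ K, ‖f y v‖ ≤ C * (1 + ‖y‖)) {t : ℝ} (ht : t ∈ Icc 0 T) :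
    ‖x t‖ ≤ gronwallBound ‖x₀‖ C C T := by
  obtain ⟨L, hL⟩ := h.lipschitzOnWith
  have hintegral : ∀ t ∈ Icc 0 T, ‖x t‖ ≤ ‖x₀‖ + ∫ s in 0..t, (C * ‖x s‖ + C) := by
    intro t ht
    have hsub : Ioo 0 t ⊆ Ioo 0 T := Ioo_subset_Ioo_right ht.2
    have hLt := hL.mono (Icc_subset_Icc_right ht.2)
    have hx : ∫ s in 0..t, f (x s) (u s) = x t - x₀ := by
      rw [← h.init]
      exact integral_eq_sub_of_lipschitzOnWith_of_ae_hasDerivAt ht.1 hLt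
        (ae_restrict_of_ae_restrict_of_subset hsub h.hasDerivAt)
    have hcont : ContinuousOn (fun s => C * ‖x s‖ + C) (Icc 0 t) := by
      have := hLt.continuousOn
      fun_prop
    have hxt : ‖x t - x₀‖ ≤ ∫ s in 0..t, (C * ‖x s‖ + C) := by
      rw [← hx]
      refine intervalIntegral.norm_integral_le_of_norm_le ht.1 ?_
        (hcont.intervalIntegrable_of_Icc ht.1)
      rw [← ae_restrict_iff' measurableSet_Ioc, ← restrict_Ioo_eq_restrict_Ioc]
      filter_upwards [ae_restrict_of_ae_restrict_of_subset hsub h.control_mem] with s hs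
      linarith [hC (x s) (u s) hs]
    linarith [norm_le_norm_add_norm_sub' (x t) x₀]
  refine (le_gronwallBound_of_le_integral C.2 hL.continuousOn.norm hintegral t ht).trans ?_
  exact gronwallBound_mono (norm_nonneg _) C.2 C.2 (by linarith [ht.2])

theorem IsAdmissible.extendedState_sub_extendedState [CompleteSpace E]
    (h : IsAdmissible T x₀ K f x u)
    (hint : IntervalIntegrable (fun t => extendedVelocity f g (x t) (u t)) volume 0 T) {a b : ℝ}
    (ha : a ∈ Icc 0 T) (hb : b ∈ Icc 0 T) (hab : a ≤ b) :
    extendedState g x u b - extendedState g x u a =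
      ∫ t in a..b, extendedVelocity f g (x t) (u t) := by
  have h0T : uIcc 0 T = Icc 0 T := uIcc_of_le (ha.1.trans ha.2)
  have h0 : (0 : ℝ) ∈ Icc 0 T := h0T ▸ left_mem_uIcc
  have hint_ab := hint.mono_set (h0T ▸ uIcc_subset_Icc ha hb)
  have hg : IntervalIntegrable (fun t => g (x t) (u t)) volume 0 T := ⟨hint.1.snd, hint.2.snd⟩
  obtain ⟨L, hL⟩ := h.lipschitzOnWith
  apply Prod.ext
  · refine Eq.trans ?_
      ((ContinuousLinearMap.fst ℝ E ℝ).intervalIntegral_comp_comm hint_ab)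
    exact (integral_eq_sub_of_lipschitzOnWith_of_ae_hasDerivAt hab
      (hL.mono (Icc_subset_Icc ha.1 hb.2))
      (ae_restrict_of_ae_restrict_of_subset (Ioo_subset_Ioo ha.1 hb.2) h.hasDerivAt)).symm
  · refine Eq.trans ?_
      ((ContinuousLinearMap.snd ℝ E ℝ).intervalIntegral_comp_comm hint_ab)
    exact intervalIntegral.integral_interval_sub_left
      (hg.mono_set (h0T ▸ uIcc_subset_Icc h0 hb)) (hg.mono_set (h0T ▸ uIcc_subset_Icc h0 ha))

variable [TopologicalSpace U]

theorem exists_ae_norm_extendedVelocity_le [ProperSpace E] (hK : IsCompact K)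
    (hf : Continuous (uncurry f)) (hg : Continuous (uncurry g))
    (hC : ∀ y, ∀ v ∈ K, ‖f y v‖ ≤ C * (1 + ‖y‖)) (T : ℝ) (x₀ : E) :
    ∃ M : ℝ≥0, ∀ x u, IsAdmissible T x₀ K f x u →
      ∀ᵐ t ∂volume.restrict (Ioo 0 T), ‖extendedVelocity f g (x t) (u t)‖ ≤ M := by
  obtain ⟨M, hM⟩ := ((isCompact_closedBall (0 : E) (gronwallBound ‖x₀‖ C C T)).prod hK)
    |>.exists_bound_of_continuousOn (hf.prodMk hg).continuousOn
  refine ⟨M.toNNReal, fun x u h => ?_⟩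
  filter_upwards [h.control_mem, ae_restrict_mem measurableSet_Ioo] with t hu ht
  have hx := h.norm_le_gronwallBound hC (Ioo_subset_Icc_self ht)
  exact (hM (x t, u t) ⟨mem_closedBall_zero_iff.2 hx, hu⟩).trans (Real.le_coe_toNNReal M)

variable [OpensMeasurableSpace U] [FiniteDimensional ℝ E]

theorem IsAdmissible.intervalIntegrable_extendedVelocity (h : IsAdmissible T x₀ K f x u)
    (hT : 0 ≤ T) (hf : Continuous (uncurry f)) (hg : Continuous (uncurry g))
    (hM : ∀ᵐ t ∂volume.restrict (Ioo 0 T), ‖extendedVelocity f g (x t) (u t)‖ ≤ M) :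
    IntervalIntegrable (fun t => extendedVelocity f g (x t) (u t)) volume 0 T := by
  borelize E
  rw [intervalIntegrable_iff_integrableOn_Ioo_of_le hT]
  obtain ⟨L, hL⟩ := h.lipschitzOnWith
  have hx : AEMeasurable x (volume.restrict (Ioo 0 T)) :=
    (hL.continuousOn.mono Ioo_subset_Icc_self).aemeasurable measurableSet_Ioo
  refine Integrable.of_bound ?_ M hM
  exact ((hf.prodMk hg).measurable.comp_aemeasurable
    (hx.prodMk h.measurable_control.aemeasurable)).aestronglyMeasurable

theorem IsAdmissible.lipschitzOnWith_extendedState (h : IsAdmissible T x₀ K f x u)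
    (hf : Continuous (uncurry f)) (hg : Continuous (uncurry g))
    (hM : ∀ᵐ t ∂volume.restrict (Ioo 0 T), ‖extendedVelocity f g (x t) (u t)‖ ≤ M) :
    LipschitzOnWith M (extendedState g x u) (Icc 0 T) :=
  lipschitzOnWith_of_sub_eq_integral (fun _ hs _ ht => h.extendedState_sub_extendedState
    (h.intervalIntegrable_extendedVelocity (hs.1.trans hs.2) hf hg hM) hs ht) hM

theorem IsAdmissible.slope_extendedState_mem (h : IsAdmissible T x₀ K f x u)
    (hf : Continuous (uncurry f)) (hg : Continuous (uncurry g))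
    (hM : ∀ᵐ t ∂volume.restrict (Ioo 0 T), ‖extendedVelocity f g (x t) (u t)‖ ≤ M)
    {A : Set (E × ℝ)} (hA : Convex ℝ A) (hAc : IsClosed A) {a b : ℝ} (ha : a ∈ Icc 0 T)
    (hb : b ∈ Icc 0 T) (hab : a < b)
    (hxA : ∀ s ∈ Icc a b, ∀ v ∈ K, extendedVelocity f g (x s) v ∈ A) :
    slope (extendedState g x u) a b ∈ A := by
  have hT : 0 ≤ T := ha.1.trans ha.2
  have hint := h.intervalIntegrable_extendedVelocity hT hf hg hM
  refine slope_mem_of_sub_eq_integral hA hAc hab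
    (hint.mono_set (uIcc_of_le hT ▸ uIcc_subset_Icc ha hb))
    (h.extendedState_sub_extendedState hint ha hb hab.le) ?_
  rw [← restrict_Ioo_eq_restrict_Ioc]
  filter_upwards [ae_restrict_mem measurableSet_Ioo,
    ae_restrict_of_ae_restrict_of_subset (Ioo_subset_Ioo ha.1 hb.2) h.control_mem] with s hs hus
  exact hxA s (Ioo_subset_Icc_self hs) (u s) hus

theorem hasDerivAt_mem_relaxedVelocitySet_of_tendsto {ι : Type*} {l : Filter ι} [l.NeBot]
    (hK : IsCompact K) (hf : Continuous (uncurry f)) (hg : Continuous (uncurry g))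
    {x : ι → ℝ → E} {u : ι → ℝ → U} (h : ∀ n, IsAdmissible T x₀ K f (x n) (u n))
    (hM : ∀ n, ∀ᵐ t ∂volume.restrict (Ioo 0 T), ‖extendedVelocity f g (x n t) (u n t)‖ ≤ M)
    {z : ℝ → E × ℝ}
    (hz : ∀ t ∈ Icc 0 T, Tendsto (fun n => extendedState g (x n) (u n) t) l (𝓝 (z t)))
    {t : ℝ} (ht : t ∈ Ioo 0 T) {z' : E × ℝ} (hz' : HasDerivAt z z' t) :
    z' ∈ relaxedVelocitySet K f g (z t).1 := by
  have htIcc := Ioo_subset_Icc_self ht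
  have hIoc : Ioc t T ∈ 𝓝[>] t := Ioc_mem_nhdsGT ht.2
  have hIcc : ∀ b ∈ Ioc t T, b ∈ Icc 0 T := fun b hb => ⟨htIcc.1.trans hb.1.le, hb.2⟩
  refine hasDerivWithinAt_mem_of_tendsto_of_slope_mem isClosed_closedConvexHull
    hz'.hasDerivWithinAt (hz t htIcc) (mem_of_superset hIoc fun b hb => hz b (hIcc b hb)) ?_
  intro ε hε
  have hnear := eventually_forall_mem_of_tendsto_of_lipschitzOnWith
    (fun n => (h n).lipschitzOnWith_extendedState hf hg (hM n)) (Ioo_subset_Ico_self ht)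
    (hz t htIcc) (continuous_fst.continuousAt.preimage_mem_nhds
      (eventually_extendedVelocity_mem_cthickening hK hf hg (z t).1 hε))
  filter_upwards [hnear, hIoc] with b hb hbT
  filter_upwards [hb] with n hn
  exact (h n).slope_extendedState_mem hf hg (hM n) (convex_closedConvexHull.cthickening ε)
    isClosed_cthickening htIcc (hIcc b hbT) hbT.1 hn

/-- A solution, starting at `(x₀, 0)`, of the convexified differential inclusion for the extended
state. It is required to be Lipschitz on the whole line, so that it is measurable. -/
structure IsRelaxedTrajectory (T : ℝ) (x₀ : E) (K : Set U) (f : E → U → E) (g : E → U → ℝ)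
    (z : ℝ → E × ℝ) : Prop where
  lipschitzWith : ∃ L : ℝ≥0, LipschitzWith L z
  init : z 0 = (x₀, 0)
  deriv_mem : ∀ᵐ t ∂volume.restrict (Ioo 0 T), deriv z t ∈ relaxedVelocitySet K f g (z t).1

theorem exists_isRelaxedTrajectory_of_tendsto_cost {ι : Type*} {l : Filter ι} [l.NeBot]
    (hT : 0 ≤ T) (hK : IsCompact K) (hf : Continuous (uncurry f)) (hg : Continuous (uncurry g))
    (hC : ∀ y, ∀ v ∈ K, ‖f y v‖ ≤ C * (1 + ‖y‖))
    {x : ι → ℝ → E} {u : ι → ℝ → U} (h : ∀ n, IsAdmissible T x₀ K f (x n) (u n)) {J : ℝ}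
    (hJ : Tendsto (fun n => cost T g (x n) (u n)) l (𝓝 J)) :
    ∃ z, IsRelaxedTrajectory T x₀ K f g z ∧ (z T).2 = J := by
  obtain ⟨M, hM⟩ := exists_ae_norm_extendedVelocity_le hK hf hg hC T x₀
  have hinit : ∀ n, extendedState g (x n) (u n) 0 = (x₀, 0) := fun n => by
    simp [extendedState, (h n).init]
  obtain ⟨z, hzL, hz⟩ := exists_lipschitzWith_tendsto_ultrafilter_Icc (Ultrafilter.of l) hT
    (fun n => (h n).lipschitzOnWith_extendedState hf hg (hM _ _ (h n)))
    (fun n => by rw [hinit n]; exact mem_closedBall_self le_rfl)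
  refine ⟨z, ⟨⟨M, hzL⟩, ?_, ?_⟩, ?_⟩
  · refine tendsto_nhds_unique (hz 0 (left_mem_Icc.2 hT)) ?_
    simp only [hinit, tendsto_const_nhds]
  · filter_upwards [ae_restrict_of_ae hzL.ae_differentiableAt_real,
      ae_restrict_mem measurableSet_Ioo] with t hzt ht
    exact hasDerivAt_mem_relaxedVelocitySet_of_tendsto hK hf hg h (fun n => hM _ _ (h n)) hz ht
      hzt.hasDerivAt
  · refine tendsto_nhds_unique (hz T (right_mem_Icc.2 hT)).snd_nhds ?_
    simpa only [extendedState_snd_eq_cost hT] using hJ.mono_left (Ultrafilter.of_le l)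

variable [MeasurableSpace E] [BorelSpace E] {φ : E → E → U}

theorem IsRelaxedTrajectory.exists_isAdmissible_cost_le {z : ℝ → E × ℝ}
    (hz : IsRelaxedTrajectory T x₀ K f g z) (hT : 0 ≤ T) (hK : IsCompact K)
    (hf : Continuous (uncurry f)) (hg : Continuous (uncurry g))
    (hC : ∀ y, ∀ v ∈ K, ‖f y v‖ ≤ C * (1 + ‖y‖)) (hφ : Measurable (uncurry φ))
    (hφK : IsDominatingSelection K f g φ) :
    ∃ x u, IsAdmissible T x₀ K f x u ∧ cost T g x u ≤ (z T).2 := by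
  obtain ⟨L, hzL⟩ := hz.lipschitzWith
  have hfst := LipschitzWith.prod_fst.comp hzL
  have hsnd := LipschitzWith.prod_snd.comp hzL
  let x : ℝ → E := fun t => (z t).1
  let u : ℝ → U := fun t => φ (x t) (deriv z t).1
  have hz' : ∀ᵐ t ∂volume.restrict (Ioo 0 T), HasDerivAt z (deriv z t) t :=
    (ae_restrict_of_ae hzL.ae_differentiableAt_real).mono fun t ht => ht.hasDerivAt
  have hu : ∀ᵐ t ∂volume.restrict (Ioo 0 T),
      u t ∈ K ∧ f (x t) (u t) = (deriv z t).1 ∧ g (x t) (u t) ≤ (deriv z t).2 :=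
    hz.deriv_mem.mono fun t ht => hφK _ _ ht
  have hadm : IsAdmissible T x₀ K f x u :=
    { measurable_control :=
        hφ.comp (hfst.continuous.measurable.prodMk (measurable_deriv z).fst)
      control_mem := hu.mono fun t ht => ht.1
      lipschitzOnWith := ⟨_, hfst.lipschitzOnWith⟩
      init := congrArg Prod.fst hz.init
      hasDerivAt := by
        filter_upwards [hu, hz'] with t hut hzt
        rw [hut.2.1]
        exact hzt.fst }
  refine ⟨x, u, hadm, ?_⟩
  have hsnd' : ∀ᵐ t ∂volume.restrict (Ioo 0 T),
      HasDerivAt (fun t => (z t).2) (deriv z t).2 t := hz'.mono fun t ht => ht.snd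
  obtain ⟨M, hM⟩ := exists_ae_norm_extendedVelocity_le hK hf hg hC T x₀
  have hgint : IntervalIntegrable (fun t => g (x t) (u t)) volume 0 T :=
    have hint := hadm.intervalIntegrable_extendedVelocity hT hf hg (hM x u hadm)
    ⟨hint.1.snd, hint.2.snd⟩
  calc cost T g x u = ∫ t in 0..T, g (x t) (u t) := (extendedState_snd_eq_cost hT g x u).symm
    _ ≤ ∫ t in 0..T, (deriv z t).2 := by
      refine intervalIntegral.integral_mono_ae_restrict hT hgint
        (intervalIntegrable_of_lipschitzOnWith_of_ae_hasDerivAt hT hsnd.lipschitzOnWith hsnd') ?_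
      rw [← restrict_Ioo_eq_restrict_Icc]
      exact hu.mono fun t ht => ht.2.2
    _ = (z T).2 - (z 0).2 :=
      integral_eq_sub_of_lipschitzOnWith_of_ae_hasDerivAt hT hsnd.lipschitzOnWith hsnd'
    _ = (z T).2 := by rw [hz.init, sub_zero]

theorem exists_isAdmissible_forall_cost_le (hT : 0 ≤ T) (hK : IsCompact K)
    (hf : Continuous (uncurry f)) (hg : Continuous (uncurry g))
    (hC : ∀ y, ∀ v ∈ K, ‖f y v‖ ≤ C * (1 + ‖y‖)) (hφ : Measurable (uncurry φ))
    (hφK : IsDominatingSelection K f g φ) (hne : ∃ x u, IsAdmissible T x₀ K f x u) :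
    ∃ x u, IsAdmissible T x₀ K f x u ∧
      ∀ y v, IsAdmissible T x₀ K f y v → cost T g x u ≤ cost T g y v := by
  let costs : Set ℝ := {J | ∃ x u, IsAdmissible T x₀ K f x u ∧ cost T g x u = J}
  have hcosts_ne : costs.Nonempty := by
    obtain ⟨x, u, h⟩ := hne
    exact ⟨_, x, u, h, rfl⟩
  have hcosts_bdd : BddBelow costs := by
    obtain ⟨M, hM⟩ := exists_ae_norm_extendedVelocity_le hK hf hg hC T x₀
    refine ⟨-(M * volume.real (Ioo 0 T)), ?_⟩
    rintro _ ⟨x, u, h, rfl⟩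
    exact neg_le_of_abs_le (norm_setIntegral_le_of_norm_le_const_ae measure_Ioo_lt_top
      ((hM x u h).mono fun t ht => (norm_snd_le _).trans ht))
  obtain ⟨J, -, hJ, hJ_mem⟩ := exists_seq_tendsto_sInf hcosts_ne hcosts_bdd
  choose x u h hcost using hJ_mem
  obtain ⟨z, hz, hzT⟩ := exists_isRelaxedTrajectory_of_tendsto_cost hT hK hf hg hC h
    (by simpa only [hcost] using hJ)
  obtain ⟨x, u, hxu, hle⟩ := hz.exists_isAdmissible_cost_le hT hK hf hg hC hφ hφK
  exact ⟨x, u, hxu, fun y v hyv => hle.trans (hzT.trans_le (csInf_le hcosts_bdd ⟨y, v, hyv, rfl⟩))⟩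

end Admissible

section Quadratic

/-- The larger root `u` of `q u + u ^ 2 = d`, provided that the discriminant is nonnegative. -/
noncomputable def largerRoot (q d : ℝ) : ℝ :=
  (-q + √(q ^ 2 + 4 * d)) / 2

/-- The root `u` of `q u + u ^ 2 = d` at which `c u + u ^ 2` is smallest, provided that
`0 ≤ q * (q - c)`: the larger one if `0 ≤ q` and `c ≤ q`, otherwise the smaller one, written as
the negative of the larger root for `-q`. -/
noncomputable def cheapestRoot (q c d : ℝ) : ℝ :=
  if 0 ≤ q ∧ c ≤ q then largerRoot q d else -largerRoot (-q) d

theorem measurable_cheapestRoot : Measurable fun p : ℝ × ℝ × ℝ => cheapestRoot p.1 p.2.1 p.2.2 := by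
  unfold cheapestRoot largerRoot
  refine Measurable.ite ?_ (by fun_prop) (by fun_prop)
  exact (measurableSet_le measurable_const measurable_fst).inter
    (measurableSet_le (by fun_prop) measurable_fst)

variable {q c m s : ℝ}

theorem largerRoot_dominates (hq : 0 ≤ q) (hcq : c ≤ q) (hms : m ^ 2 ≤ s) (hs : s ≤ 1) :
    largerRoot q (q * m + s) ∈ Icc (-1) 1 ∧
    q * largerRoot q (q * m + s) + largerRoot q (q * m + s) ^ 2 = q * m + s ∧
    c * largerRoot q (q * m + s) + largerRoot q (q * m + s) ^ 2 ≤ c * m + s := by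
  have hm := abs_le.1 ((sq_le_one_iff_abs_le_one m).1 (hms.trans hs))
  have hdisc : (q + 2 * m) ^ 2 ≤ q ^ 2 + 4 * (q * m + s) := by linarith
  have hroot : q * largerRoot q (q * m + s) + largerRoot q (q * m + s) ^ 2 = q * m + s := by
    have := Real.sq_sqrt ((sq_nonneg _).trans hdisc)
    rw [largerRoot]
    linarith
  have hm_le : m ≤ largerRoot q (q * m + s) := by
    have := (le_abs_self _).trans (Real.abs_le_sqrt hdisc)
    rw [largerRoot]
    linarith
  have hle_one : largerRoot q (q * m + s) ≤ 1 := by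
    have : √(q ^ 2 + 4 * (q * m + s)) ≤ q + 2 :=
      Real.sqrt_le_iff.2 ⟨by linarith, by nlinarith⟩
    rw [largerRoot]
    linarith
  refine ⟨⟨hm.1.trans hm_le, hle_one⟩, hroot, ?_⟩
  linarith [mul_nonneg (sub_nonneg.2 hcq) (sub_nonneg.2 hm_le)]

theorem cheapestRoot_dominates (hcq : 0 ≤ q * (q - c)) (hms : m ^ 2 ≤ s) (hs : s ≤ 1) :
    cheapestRoot q c (q * m + s) ∈ Icc (-1) 1 ∧
    q * cheapestRoot q c (q * m + s) + cheapestRoot q c (q * m + s) ^ 2 = q * m + s ∧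
    c * cheapestRoot q c (q * m + s) + cheapestRoot q c (q * m + s) ^ 2 ≤ c * m + s := by
  rw [cheapestRoot]
  split_ifs with h
  · exact largerRoot_dominates h.1 h.2 hms hs
  · have hneg : 0 ≤ -q ∧ -c ≤ -q := by
      by_contra hcon
      rw [not_and_or, not_le, not_le] at h hcon
      rcases h with h | h <;> rcases hcon with hcon | hcon <;> nlinarith
    obtain ⟨hmem, hroot, hle⟩ :=
      largerRoot_dominates hneg.1 hneg.2 ((neg_sq m).trans_le hms) hs
    rw [neg_mul_neg] at hmem hroot hle
    exact ⟨⟨neg_le_neg hmem.2, neg_le.1 hmem.1⟩, by linarith, by linarith⟩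

/-- The pairs `(∫ u dμ, ∫ u ^ 2 dμ)` of moments of probability measures `μ` on `[-1, 1]`. -/
def momentSet : Set (ℝ × ℝ) :=
  {p | p.1 ^ 2 ≤ p.2 ∧ p.2 ≤ 1}

theorem convex_momentSet : Convex ℝ momentSet := by
  have hepi : Convex ℝ {p : ℝ × ℝ | p.1 ^ 2 ≤ p.2} := by
    simpa using (even_two.convexOn_pow (𝕜 := ℝ)).convex_epigraph
  exact hepi.inter (convex_halfSpace_le (LinearMap.snd ℝ ℝ ℝ).isLinear 1)

theorem isCompact_momentSet : IsCompact momentSet := by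
  refine (isCompact_Icc (a := ((-1, 0) : ℝ × ℝ)) (b := (1, 1))).of_isClosed_subset
    ((isClosed_le (by fun_prop) continuous_snd).inter
      (isClosed_le continuous_snd continuous_const)) ?_
  rintro ⟨m, s⟩ ⟨hms, hs⟩
  have hm := abs_le.1 ((sq_le_one_iff_abs_le_one m).1 (hms.trans hs))
  exact ⟨⟨hm.1, (sq_nonneg m).trans hms⟩, ⟨hm.2, hs⟩⟩

theorem relaxedVelocitySet_subset_image_momentSet (c q : ℝ → ℝ) (x : ℝ) :
    relaxedVelocitySet (Icc (-1) 1) (fun x u => q x * u + u ^ 2) (fun x u => c x * u + u ^ 2) x ⊆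
      (fun p : ℝ × ℝ => (q x * p.1 + p.2, c x * p.1 + p.2)) '' momentSet := by
  refine closedConvexHull_min ?_ (convex_momentSet.is_linear_image ?_)
    (isCompact_momentSet.image (by fun_prop)).isClosed
  · rintro _ ⟨u, hu, rfl⟩
    exact ⟨(u, u ^ 2), ⟨le_rfl, (sq_le_one_iff_abs_le_one u).2 (abs_le.2 hu)⟩, rfl⟩
  · exact
      { map_add := fun p r => by ext <;> simp only [Prod.fst_add, Prod.snd_add] <;> ring
        map_smul := fun a p => by
          ext <;> simp only [Prod.smul_fst, Prod.smul_snd, smul_eq_mul] <;> ring }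

theorem isDominatingSelection_cheapestRoot {c q : ℝ → ℝ} (hcq : ∀ x, 0 ≤ q x * (q x - c x)) :
    IsDominatingSelection (Icc (-1) 1) (fun x u => q x * u + u ^ 2) (fun x u => c x * u + u ^ 2)
      (fun x d => cheapestRoot (q x) (c x) d) := by
  intro x p hp
  obtain ⟨⟨m, s⟩, ⟨hms, hs⟩, rfl⟩ := relaxedVelocitySet_subset_image_momentSet c q x hp
  exact cheapestRoot_dominates (hcq x) hms hs

end Quadratic

theorem norm_le_mul_one_add_norm_of_lipschitzWith {V W : Type*} [SeminormedAddCommGroup V]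
    [SeminormedAddCommGroup W] {f : V → W} {L : ℝ≥0} (hf : LipschitzWith L f) (x : V) :
    ‖f x‖ ≤ (‖f 0‖₊ + L : ℝ≥0) * (1 + ‖x‖) := by
  have hdist : ‖f x - f 0‖ ≤ L * ‖x‖ := by simpa using hf.norm_sub_le x 0
  have htri := norm_le_norm_add_norm_sub' (f x) (f 0)
  have hcross : 0 ≤ ‖f 0‖ * ‖x‖ := by positivity
  push_cast [coe_nnnorm]
  linarith [L.2]

theorem stmt_15_general {T : ℝ} (hT : 0 ≤ T) (x₀ : ℝ) {c q : ℝ → ℝ} (hc : Continuous c)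
    (hq : Continuous q) {C : ℝ≥0} (hqC : ∀ x, ‖q x‖ ≤ C * (1 + ‖x‖))
    (hcq : ∀ x, 0 ≤ q x * (q x - c x)) :
    ∃ x u, IsAdmissible T x₀ (Icc (-1) 1) (fun x u => q x * u + u ^ 2) x u ∧
      ∀ y v, IsAdmissible T x₀ (Icc (-1) 1) (fun x u => q x * u + u ^ 2) y v →
        cost T (fun x u => c x * u + u ^ 2) x u ≤ cost T (fun x u => c x * u + u ^ 2) y v := by
  refine exists_isAdmissible_forall_cost_le (C := C + 1)
    (φ := fun x d => cheapestRoot (q x) (c x) d) hT isCompact_Icc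
    (by simp only [uncurry_def]; fun_prop) (by simp only [uncurry_def]; fun_prop) ?_ ?_
    (isDominatingSelection_cheapestRoot hcq) ?_
  · intro x u hu
    have hu_le : ‖u‖ ≤ 1 := abs_le.2 hu
    calc ‖q x * u + u ^ 2‖ ≤ ‖q x‖ * ‖u‖ + ‖u‖ ^ 2 := by
          rw [← norm_mul, ← norm_pow]
          exact norm_add_le _ _
      _ ≤ C * (1 + ‖x‖) * 1 + 1 ^ 2 := by gcongr; exact hqC x
      _ ≤ (C + 1 : ℝ≥0) * (1 + ‖x‖) := by push_cast; linarith [norm_nonneg x]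
  · exact measurable_cheapestRoot.comp (f := fun p : ℝ × ℝ => (q p.1, c p.1, p.2)) (by fun_prop)
  · exact ⟨fun _ => x₀, fun _ => 0, measurable_const, by simp,
      ⟨0, (LipschitzWith.const x₀).lipschitzOnWith⟩, rfl,
      by simp [hasDerivAt_const]⟩

theorem stmt_15
    (T : ℝ) (hT : 0 < T) (x0 : ℝ)
    (c q : ℝ → ℝ)
    (hc : ∃ Lc : NNReal, LipschitzWith Lc c)
    (hq : ∃ Lq : NNReal, LipschitzWith Lq q)
    (hcq : ∀ x : ℝ, 0 < q x * (q x - c x)) :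
    ∃ (x : ℝ → ℝ) (u : ℝ → ℝ),
      (Measurable u ∧ (∀ᵐ t ∂(volume.restrict (Set.Ioo 0 T)), u t ∈ Set.Icc (-1:ℝ) 1) ∧
       (∃ Lx : NNReal, LipschitzOnWith Lx x (Set.Icc 0 T)) ∧ x 0 = x0 ∧
       (∀ᵐ t ∂(volume.restrict (Set.Ioo 0 T)),
          HasDerivAt x (q (x t) * u t + (u t) ^ 2) t)) ∧
      ∀ (y : ℝ → ℝ) (v : ℝ → ℝ),
        (Measurable v ∧ (∀ᵐ t ∂(volume.restrict (Set.Ioo 0 T)), v t ∈ Set.Icc (-1:ℝ) 1) ∧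
         (∃ Ly : NNReal, LipschitzOnWith Ly y (Set.Icc 0 T)) ∧ y 0 = x0 ∧
         (∀ᵐ t ∂(volume.restrict (Set.Ioo 0 T)),
            HasDerivAt y (q (y t) * v t + (v t) ^ 2) t)) →
        (∫ t in Set.Ioo 0 T, (c (x t) * u t + (u t) ^ 2)) ≤
          (∫ t in Set.Ioo 0 T, (c (y t) * v t + (v t) ^ 2)) := by
  obtain ⟨Lc, hc⟩ := hc
  obtain ⟨Lq, hq⟩ := hq
  obtain ⟨x, u, ⟨hu, huK, hxL, hx0, hx⟩, hmin⟩ :=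
    stmt_15_general hT.le x0 hc.continuous hq.continuous
      (norm_le_mul_one_add_norm_of_lipschitzWith hq) fun x => (hcq x).le
  exact ⟨x, u, ⟨hu, huK, hxL, hx0, hx⟩, fun y v ⟨hv, hvK, hyL, hy0, hy⟩ =>
    hmin y v ⟨hv, hvK, hyL, hy0, hy⟩⟩
end

section
/- Let T > 0, x0 ∈ ℝ, 0 < a_0 ≤ a_1, K = [a_0,a_1], and let c, q : ℝ → ℝ be Lipschitz functions satisfying c(x) < q(x) and q(x) > 0 for every x ∈ ℝ. Then the optimal control problem 'minimize ∫₀ᵀ [c(x(t)) u(t)² + u(t)³] dt over admissible pairs for the state equation x′(t) = q(x(t)) u(t)² + u(t)³' admits at least one solution. -/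
open MeasureTheory

open Filter Function Set

/-!
Since the speed is positive, every trajectory can be parametrised by its position `ξ`. A multiplier
`l` per unit of time bounds the cost of a trajectory from `x0` to `X` below by
`∫ ξ in x0..X, min_s (cost ξ s + l) / speed ξ s - l * T`, with equality for the feedback control
attaining the minimum, provided its travel time from `x0` to `X` is exactly `T`. An intermediate
value argument finds such an `l` for every reachable endpoint `X`. The pairs `(l, X)` that arise
form a compact set, and minimising the bound over it yields an optimal trajectory.

For `speed = q s² + s³` and `cost = c s² + s³` the minimiser over `s` is unique, hence continuous
in `(l, ξ)`, because `s³` is strictly convex as a function of `s²`.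
-/

section ChangeOfVariables

variable {a b : ℝ} {Φ g y d h : ℝ → ℝ} {C : NNReal}

theorem integrableOn_and_setIntegral_mul_deriv_of_lipschitzOnWith (hab : a ≤ b)
    (hΦ : ∀ ξ, HasDerivAt Φ (g ξ) ξ) (hg : Continuous g) (hy : LipschitzOnWith C y (Icc a b))
    (hd : ∀ᵐ t ∂volume.restrict (Ioo a b), HasDerivAt y (d t) t) :
    IntegrableOn (fun t => g (y t) * d t) (Ioo a b) ∧
      ∫ t in Ioo a b, g (y t) * d t = Φ (y b) - Φ (y a) := by
  have hΦ_contDiff : ContDiff ℝ 1 Φ := by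
    refine contDiff_one_iff_deriv.2 ⟨fun ξ => (hΦ ξ).differentiableAt, ?_⟩
    rwa [show deriv Φ = g from funext fun ξ => (hΦ ξ).deriv]
  obtain ⟨C', hC'⟩ := hΦ_contDiff.locallyLipschitz.locallyLipschitzOn
    |>.exists_lipschitzOnWith_of_compact (isCompact_Icc.image_of_continuousOn hy.continuousOn)
  have hac : AbsolutelyContinuousOnInterval (Φ ∘ y) a b := by
    have hlip := hC'.comp hy (mapsTo_image _ _)
    rw [← uIcc_of_le hab] at hlip
    exact hlip.absolutelyContinuousOnInterval
  have hderiv : ∀ᵐ t ∂volume.restrict (Ioo a b), deriv (Φ ∘ y) t = g (y t) * d t :=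
    hd.mono fun t ht => ((hΦ (y t)).comp t ht).deriv
  have hint := (intervalIntegrable_iff_integrableOn_Ioo_of_le hab).1 hac.intervalIntegrable_deriv
  refine ⟨hint.congr hderiv, ?_⟩
  rw [← integral_congr_ae hderiv, ← integral_Ioc_eq_integral_Ioo,
    ← intervalIntegral.integral_of_le hab, hac.integral_deriv_eq_sub, comp_apply, comp_apply]

end ChangeOfVariables

section TravelTime

/-- The time needed to travel from `x0` to `X` when the speed at position `ξ` is `F ξ`. -/
noncomputable def travelTime (F : ℝ → ℝ) (x0 X : ℝ) : ℝ :=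
  ∫ ξ in x0..X, (F ξ)⁻¹

variable {F : ℝ → ℝ} {A x0 : ℝ}

theorem hasDerivAt_travelTime (hF : Continuous F) (hpos : ∀ ξ, 0 < F ξ) (X : ℝ) :
    HasDerivAt (travelTime F x0) (F X)⁻¹ X :=
  ((hF.inv₀ fun ξ => (hpos ξ).ne').integral_hasStrictDerivAt x0 X).hasDerivAt

theorem strictMono_travelTime (hF : Continuous F) (hpos : ∀ ξ, 0 < F ξ) :
    StrictMono (travelTime F x0) :=
  strictMono_of_deriv_pos fun X => by
    rw [(hasDerivAt_travelTime hF hpos X).deriv]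
    exact inv_pos.2 (hpos X)

-- Linear growth is expressed through `√(1 + ξ ^ 2)` because its inverse is the derivative of
-- `arsinh`, which is therefore, up to the factor `A⁻¹`, a lower bound for the travel time.
theorem monotone_travelTime_sub_arsinh (hF : Continuous F) (hpos : ∀ ξ, 0 < F ξ)
    (hgrowth : ∀ ξ, F ξ ≤ A * √(1 + ξ ^ 2)) :
    Monotone fun X => travelTime F x0 X - A⁻¹ * Real.arsinh X := by
  have hderiv X : HasDerivAt (fun X => travelTime F x0 X - A⁻¹ * Real.arsinh X)
      ((F X)⁻¹ - A⁻¹ * (√(1 + X ^ 2))⁻¹) X :=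
    (hasDerivAt_travelTime hF hpos X).sub ((Real.hasDerivAt_arsinh X).const_mul A⁻¹)
  refine monotone_of_deriv_nonneg (fun X => (hderiv X).differentiableAt) fun X => ?_
  rw [(hderiv X).deriv, ← mul_inv, sub_nonneg]
  exact inv_anti₀ (hpos X) (hgrowth X)

theorem surjective_travelTime (hF : Continuous F) (hpos : ∀ ξ, 0 < F ξ)
    (hgrowth : ∀ ξ, F ξ ≤ A * √(1 + ξ ^ 2)) : Surjective (travelTime F x0) := by
  have hA : 0 < A⁻¹ := inv_pos.2 <|
    pos_of_mul_pos_left ((hpos 0).trans_le (hgrowth 0)) (Real.sqrt_nonneg _)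
  have hmono := monotone_travelTime_sub_arsinh (x0 := x0) hF hpos hgrowth
  refine (continuous_iff_continuousAt.2 fun X =>
    (hasDerivAt_travelTime hF hpos X).continuousAt).surjective ?_ ?_
  · have hlim : Tendsto (fun X => A⁻¹ * Real.arsinh X - A⁻¹ * Real.arsinh x0) atTop atTop :=
      tendsto_atTop_add_const_right _ _
        (Real.sinhOrderIso.symm.tendsto_atTop.const_mul_atTop hA)
    refine tendsto_atTop_mono' _ ?_ hlim
    filter_upwards [eventually_ge_atTop x0] with X hX
    have := hmono hX
    simp only [travelTime, intervalIntegral.integral_same] at this ⊢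
    linarith
  · have hlim : Tendsto (fun X => A⁻¹ * Real.arsinh X - A⁻¹ * Real.arsinh x0) atBot atBot :=
      tendsto_atBot_add_const_right _ _
        (Real.sinhOrderIso.symm.tendsto_atBot.const_mul_atBot hA)
    refine tendsto_atBot_mono' _ ?_ hlim
    filter_upwards [eventually_le_atBot x0] with X hX
    have := hmono hX
    simp only [travelTime, intervalIntegral.integral_same] at this ⊢
    linarith

theorem exists_hasDerivAt_of_pos_of_linear_growth (hF : Continuous F) (hpos : ∀ ξ, 0 < F ξ)
    (hgrowth : ∀ ξ, F ξ ≤ A * √(1 + ξ ^ 2)) :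
    ∃ x : ℝ → ℝ, (∀ t, HasDerivAt x (F (x t)) t) ∧ ∀ X, x (travelTime F x0 X) = X := by
  let e := (strictMono_travelTime (x0 := x0) hF hpos).orderIsoOfSurjective _
    (surjective_travelTime hF hpos hgrowth)
  refine ⟨e.symm, fun t => ?_, e.symm_apply_apply⟩
  simpa only [inv_inv] using HasDerivAt.of_local_left_inverse e.symm.continuous.continuousAt
    (hasDerivAt_travelTime hF hpos (e.symm t)) (inv_ne_zero (hpos _).ne')
    (Eventually.of_forall e.apply_symm_apply)

end TravelTime

section Minimizers

theorem isMinOn_sub_mul_of_isMinOn_div {α : Type*} {g f : α → ℝ} {K : Set α} {s : α} {m : ℝ}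
    (hf : ∀ w ∈ K, 0 < f w) (hs : s ∈ K) (hmin : IsMinOn (fun w => g w / f w) K s)
    (hm : g s / f s = m) : IsMinOn (fun w => g w - m * f w) K s := by
  refine isMinOn_iff.2 fun w hw => ?_
  have hle : m * f w ≤ g w := (le_div_iff₀ (hf w hw)).1 (hm ▸ hmin hw)
  have heq : g s = m * f s := (div_eq_iff (hf s hs).ne').1 hm
  rwa [heq, sub_self, sub_nonneg]

variable {X Y α : Type*} [TopologicalSpace X] [TopologicalSpace Y] [TopologicalSpace α]
  [Preorder α] [OrderClosedTopology α]

theorem continuous_of_unique_minimizer [CompactSpace Y] {φ : X → Y → α}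
    (hφ : Continuous (uncurry φ)) {U : X → Y} (hU : ∀ x y, (∀ z, φ x y ≤ φ x z) ↔ y = U x) :
    Continuous U := by
  have hgraph : IsClosed {p : X × Y | ∀ z, φ p.1 p.2 ≤ φ p.1 z} := by
    simp only [ofPred_forall]
    exact isClosed_iInter fun z => isClosed_le hφ (hφ.comp (continuous_fst.prodMk continuous_const))
  refine continuous_iff_isClosed.2 fun s hs => ?_
  convert isClosedMap_fst_of_compactSpace _ (hgraph.inter (hs.preimage continuous_snd))
  ext x
  simp [hU]

end Minimizers

section Admissible

variable {E : Type*} [MeasurableSpace E] {f : ℝ → E → ℝ} {K : Set E} {T x0 : ℝ}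

/-- The trajectory `x` on `[0, T]` starts at `x0` and is driven by the measurable control `u` with
values in `K` through the state equation `x' = f x u`. -/
structure IsAdmissible_s16 (f : ℝ → E → ℝ) (K : Set E) (T x0 : ℝ) (x : ℝ → ℝ) (u : ℝ → E) : Prop where
  measurable : Measurable u
  ae_mem : ∀ᵐ t ∂volume.restrict (Ioo 0 T), u t ∈ K
  lipschitz : ∃ C : NNReal, LipschitzOnWith C x (Icc 0 T)
  initial : x 0 = x0
  ae_hasDerivAt : ∀ᵐ t ∂volume.restrict (Ioo 0 T), HasDerivAt x (f (x t) (u t)) t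

namespace IsAdmissible_s16

variable {x Φ g h : ℝ → ℝ} {u : ℝ → E}

theorem mono (hx : IsAdmissible_s16 f K T x0 x u) {S : ℝ} (hST : S ≤ T) :
    IsAdmissible_s16 f K S x0 x u where
  measurable := hx.measurable
  ae_mem := ae_restrict_of_ae_restrict_of_subset (Ioo_subset_Ioo_right hST) hx.ae_mem
  lipschitz := hx.lipschitz.imp fun _ hC => hC.mono (Icc_subset_Icc_right hST)
  initial := hx.initial
  ae_hasDerivAt := ae_restrict_of_ae_restrict_of_subset (Ioo_subset_Ioo_right hST) hx.ae_hasDerivAt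

theorem integrableOn_and_setIntegral_mul_speed (hx : IsAdmissible_s16 f K T x0 x u) (hT : 0 ≤ T)
    (hΦ : ∀ ξ, HasDerivAt Φ (g ξ) ξ) (hg : Continuous g) :
    IntegrableOn (fun t => g (x t) * f (x t) (u t)) (Ioo 0 T) ∧
      ∫ t in Ioo 0 T, g (x t) * f (x t) (u t) = Φ (x T) - Φ x0 := by
  obtain ⟨C, hC⟩ := hx.lipschitz
  simpa only [hx.initial] using
    integrableOn_and_setIntegral_mul_deriv_of_lipschitzOnWith hT hΦ hg hC hx.ae_hasDerivAt

theorem sub_le_setIntegral (hx : IsAdmissible_s16 f K T x0 x u) (hT : 0 ≤ T)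
    (hΦ : ∀ ξ, HasDerivAt Φ (g ξ) ξ) (hg : Continuous g) (hh : IntegrableOn h (Ioo 0 T))
    (hle : ∀ᵐ t ∂volume.restrict (Ioo 0 T), g (x t) * f (x t) (u t) ≤ h t) :
    Φ (x T) - Φ x0 ≤ ∫ t in Ioo 0 T, h t := by
  obtain ⟨hint, heq⟩ := hx.integrableOn_and_setIntegral_mul_speed hT hΦ hg
  exact heq ▸ integral_mono_ae hint hh hle

theorem setIntegral_le_sub (hx : IsAdmissible_s16 f K T x0 x u) (hT : 0 ≤ T)
    (hΦ : ∀ ξ, HasDerivAt Φ (g ξ) ξ) (hg : Continuous g) (hh : IntegrableOn h (Ioo 0 T))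
    (hle : ∀ᵐ t ∂volume.restrict (Ioo 0 T), h t ≤ g (x t) * f (x t) (u t)) :
    ∫ t in Ioo 0 T, h t ≤ Φ (x T) - Φ x0 := by
  obtain ⟨hint, heq⟩ := hx.integrableOn_and_setIntegral_mul_speed hT hΦ hg
  exact heq ▸ integral_mono_ae hh hint hle

theorem le_final (hx : IsAdmissible_s16 f K T x0 x u) (hT : 0 ≤ T)
    (hnonneg : ∀ ξ, ∀ s ∈ K, 0 ≤ f ξ s) : x0 ≤ x T := by
  have h := hx.setIntegral_le_sub hT hasDerivAt_id continuous_const integrableOn_zero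
    (hx.ae_mem.mono fun t ht => by simpa using hnonneg (x t) (u t) ht)
  simpa using h

theorem arsinh_final_le (hx : IsAdmissible_s16 f K T x0 x u) (hT : 0 ≤ T) {A : ℝ}
    (hgrowth : ∀ ξ, ∀ s ∈ K, f ξ s ≤ A * √(1 + ξ ^ 2)) :
    Real.arsinh (x T) ≤ Real.arsinh x0 + A * T := by
  have hsqrt (ξ : ℝ) : 0 < √(1 + ξ ^ 2) := by positivity
  have h := hx.sub_le_setIntegral hT Real.hasDerivAt_arsinh
    (Continuous.inv₀ (by fun_prop) fun ξ => (hsqrt ξ).ne') (h := fun _ => A) (by simp)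
    (hx.ae_mem.mono fun t ht => by
      rw [inv_mul_le_iff₀ (hsqrt _), mul_comm]
      exact hgrowth (x t) (u t) ht)
  simp only [setIntegral_const, Real.volume_real_Ioo_of_le hT, smul_eq_mul] at h
  linarith

theorem mem_Icc (hx : IsAdmissible_s16 f K T x0 x u) {A : ℝ} (hA : 0 ≤ A)
    (hnonneg : ∀ ξ, ∀ s ∈ K, 0 ≤ f ξ s) (hgrowth : ∀ ξ, ∀ s ∈ K, f ξ s ≤ A * √(1 + ξ ^ 2))
    {t : ℝ} (ht : t ∈ Icc 0 T) : x t ∈ Icc x0 (Real.sinh (Real.arsinh x0 + A * T)) := by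
  have hxt := hx.mono ht.2
  refine ⟨hxt.le_final ht.1 hnonneg, ?_⟩
  rw [← Real.arsinh_le_arsinh, Real.arsinh_sinh]
  grw [hxt.arsinh_final_le ht.1 hgrowth, ht.2]

theorem travelTime_le (hx : IsAdmissible_s16 f K T x0 x u) (hT : 0 ≤ T) {F : ℝ → ℝ}
    (hF : Continuous F) (hpos : ∀ ξ, 0 < F ξ)
    (hle : ∀ t ∈ Ioo 0 T, ∀ s ∈ K, f (x t) s ≤ F (x t)) : travelTime F x0 (x T) ≤ T := by
  have h := hx.sub_le_setIntegral hT (hasDerivAt_travelTime (x0 := x0) hF hpos)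
    (hF.inv₀ fun ξ => (hpos ξ).ne') (h := fun _ => 1) (by simp) (by
      filter_upwards [hx.ae_mem, ae_restrict_mem measurableSet_Ioo] with t hut ht
      rw [inv_mul_le_iff₀ (hpos _), mul_one]
      exact hle t ht (u t) hut)
  simpa [travelTime, hT] using h

theorem le_travelTime (hx : IsAdmissible_s16 f K T x0 x u) (hT : 0 ≤ T) {F : ℝ → ℝ}
    (hF : Continuous F) (hpos : ∀ ξ, 0 < F ξ)
    (hle : ∀ t ∈ Ioo 0 T, ∀ s ∈ K, F (x t) ≤ f (x t) s) : T ≤ travelTime F x0 (x T) := by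
  have h := hx.setIntegral_le_sub hT (hasDerivAt_travelTime (x0 := x0) hF hpos)
    (hF.inv₀ fun ξ => (hpos ξ).ne') (h := fun _ => 1) (by simp) (by
      filter_upwards [hx.ae_mem, ae_restrict_mem measurableSet_Ioo] with t hut ht
      rw [le_inv_mul_iff₀ (hpos _), mul_one]
      exact hle t ht (u t) hut)
  simpa [travelTime, hT] using h

end IsAdmissible_s16

variable [TopologicalSpace E] [BorelSpace E]

theorem isAdmissible_feedback {x : ℝ → ℝ} {w : ℝ → E} (hf : Continuous (uncurry f))
    (hw : Continuous w) (hwK : ∀ ξ, w ξ ∈ K) (hx0 : x 0 = x0)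
    (hx : ∀ t, HasDerivAt x (f (x t) (w (x t))) t) :
    IsAdmissible_s16 f K T x0 x fun t => w (x t) := by
  have hcont : Continuous x := continuous_iff_continuousAt.2 fun t => (hx t).continuousAt
  have hderiv : deriv x = fun t => f (x t) (w (x t)) := funext fun t => (hx t).deriv
  have hdiff : ContDiff ℝ 1 x := contDiff_one_iff_deriv.2
    ⟨fun t => (hx t).differentiableAt, hderiv ▸ hf.comp₂ hcont (hw.comp hcont)⟩
  exact
    { measurable := (hw.comp hcont).measurable
      ae_mem := ae_of_all _ fun t => hwK (x t)
      lipschitz := hdiff.locallyLipschitz.locallyLipschitzOn.exists_lipschitzOnWith_of_compact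
        isCompact_Icc
      initial := hx0
      ae_hasDerivAt := ae_of_all _ hx }

theorem IsAdmissible_s16.integrableOn_comp [TopologicalSpace.PseudoMetrizableSpace E]
    [SecondCountableTopology E] {x : ℝ → ℝ} {u : ℝ → E} (hx : IsAdmissible_s16 f K T x0 x u)
    (hK : IsCompact K) {L : ℝ → E → ℝ} (hL : Continuous (uncurry L)) :
    IntegrableOn (fun t => L (x t) (u t)) (Ioo 0 T) := by
  obtain ⟨C, hC⟩ := hx.lipschitz
  obtain ⟨M, hM⟩ := ((isCompact_Icc.image_of_continuousOn hC.continuousOn).prod hK)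
    |>.exists_bound_of_continuousOn hL.continuousOn
  have hmeas : AEStronglyMeasurable x (volume.restrict (Ioo 0 T)) :=
    (hC.continuousOn.mono Ioo_subset_Icc_self).aestronglyMeasurable measurableSet_Ioo
  refine Integrable.of_bound
    (hL.comp_aestronglyMeasurable₂ hmeas hx.measurable.aestronglyMeasurable) M ?_
  filter_upwards [hx.ae_mem, ae_restrict_mem measurableSet_Ioo] with t hut ht
  exact hM (x t, u t) ⟨mem_image_of_mem x (Ioo_subset_Icc_self ht), hut⟩

end Admissible

section Feedback

variable {E : Type*} [TopologicalSpace E] {f L : ℝ → E → ℝ} {K : Set E} {T x0 : ℝ}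

/-- The feedback control `U`, depending continuously on a multiplier `l` and the position, minimises
over `K` the cost per unit of length that results from charging `l` per unit of time in addition to
the running cost `L`. -/
structure IsMultiplierFeedback (f L : ℝ → E → ℝ) (K : Set E) (U : ℝ → ℝ → E) : Prop where
  continuous : Continuous (uncurry U)
  mem : ∀ l ξ, U l ξ ∈ K
  isMinOn : ∀ l ξ, IsMinOn (fun s => (L ξ s + l) / f ξ s) K (U l ξ)

/-- The cost per unit of length at position `ξ` under the feedback `U` with multiplier `l`, which is
the slope of the lower bound for the cost as a function of the endpoint. -/
noncomputable def slopeCost (f L : ℝ → E → ℝ) (U : ℝ → ℝ → E) (l ξ : ℝ) : ℝ :=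
  (L ξ (U l ξ) + l) / f ξ (U l ξ)

/-- The Lagrangian dual bound, for the multiplier `l` of the travel time constraint, on the cost of
a trajectory from `x0` to `X` in time `T`. -/
noncomputable def dualBound (f L : ℝ → E → ℝ) (U : ℝ → ℝ → E) (T x0 l X : ℝ) : ℝ :=
  (∫ ξ in x0..X, slopeCost f L U l ξ) - l * T

theorem exists_isMultiplierFeedback (hK : IsCompact K) (hKne : K.Nonempty)
    (hf : Continuous (uncurry f)) (hL : Continuous (uncurry L)) (hpos : ∀ ξ, ∀ s ∈ K, 0 < f ξ s)
    (hunique : ∀ l ξ, ∀ s ∈ K, ∀ r ∈ K, IsMinOn (fun s => (L ξ s + l) / f ξ s) K s →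
      IsMinOn (fun s => (L ξ s + l) / f ξ s) K r → r = s) :
    ∃ U, IsMultiplierFeedback f L K U := by
  have hexists (p : ℝ × ℝ) : ∃ s : K, IsMinOn (fun s => (L p.2 s + p.1) / f p.2 s) K s := by
    have hcont : ContinuousOn (fun s => (L p.2 s + p.1) / f p.2 s) K :=
      ((hL.uncurry_left p.2).add continuous_const).continuousOn.div
        (hf.uncurry_left p.2).continuousOn fun s hs => (hpos p.2 s hs).ne'
    obtain ⟨s, hs, hmin⟩ := hK.exists_isMinOn hKne hcont
    exact ⟨⟨s, hs⟩, hmin⟩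
  choose V hV using hexists
  have : CompactSpace K := isCompact_iff_compactSpace.1 hK
  have hφ : Continuous (uncurry fun (p : ℝ × ℝ) (s : K) => (L p.2 s + p.1) / f p.2 s) :=
    ((hL.comp₂ (by fun_prop : Continuous fun z : (ℝ × ℝ) × K => z.1.2) (by fun_prop)).add
      (by fun_prop)).div₀ (hf.comp₂ (by fun_prop) (by fun_prop)) fun z => (hpos _ _ z.2.2).ne'
  have hVcont : Continuous V := by
    refine continuous_of_unique_minimizer hφ fun p s => ⟨fun hs => ?_, ?_⟩
    · exact Subtype.ext (hunique p.1 p.2 (V p) (V p).2 s s.2 (hV p)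
        (isMinOn_iff.2 fun r hr => hs ⟨r, hr⟩))
    · rintro rfl r
      exact hV p r.2
  exact ⟨fun l ξ => V (l, ξ), continuous_subtype_val.comp hVcont, fun l ξ => (V (l, ξ)).2,
    fun l ξ => hV (l, ξ)⟩

namespace IsMultiplierFeedback

variable {U : ℝ → ℝ → E}

theorem continuous_speed (hU : IsMultiplierFeedback f L K U) (hf : Continuous (uncurry f)) :
    Continuous (uncurry fun l ξ => f ξ (U l ξ)) :=
  hf.comp₂ continuous_snd hU.continuous

theorem continuous_slopeCost (hU : IsMultiplierFeedback f L K U) (hf : Continuous (uncurry f))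
    (hL : Continuous (uncurry L)) (hpos : ∀ ξ, ∀ s ∈ K, 0 < f ξ s) :
    Continuous (uncurry (slopeCost f L U)) :=
  ((hL.comp₂ continuous_snd hU.continuous).add continuous_fst).div₀ (hU.continuous_speed hf)
    fun p => (hpos p.2 _ (hU.mem p.1 p.2)).ne'

theorem continuous_travelTime (hU : IsMultiplierFeedback f L K U) (hf : Continuous (uncurry f))
    (hpos : ∀ ξ, ∀ s ∈ K, 0 < f ξ s) :
    Continuous fun p : ℝ × ℝ => travelTime (fun ξ => f ξ (U p.1 ξ)) x0 p.2 := by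
  have hinv : Continuous (uncurry fun (p : ℝ × ℝ) ξ => (f ξ (U p.1 ξ))⁻¹) :=
    ((hU.continuous_speed hf).comp (by fun_prop : Continuous fun z : (ℝ × ℝ) × ℝ =>
      (z.1.1, z.2))).inv₀ fun z => (hpos _ _ (hU.mem _ _)).ne'
  exact intervalIntegral.continuous_parametric_intervalIntegral_of_continuous hinv continuous_snd

theorem continuous_dualBound (hU : IsMultiplierFeedback f L K U) (hf : Continuous (uncurry f))
    (hL : Continuous (uncurry L)) (hpos : ∀ ξ, ∀ s ∈ K, 0 < f ξ s) :
    Continuous (uncurry (dualBound f L U T x0)) := by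
  have hslope : Continuous (uncurry fun (p : ℝ × ℝ) ξ => slopeCost f L U p.1 ξ) :=
    (hU.continuous_slopeCost hf hL hpos).comp (by fun_prop : Continuous fun z : (ℝ × ℝ) × ℝ =>
      (z.1.1, z.2))
  exact (intervalIntegral.continuous_parametric_intervalIntegral_of_continuous hslope
    continuous_snd).sub (by fun_prop)

theorem slopeCost_mul_le (hU : IsMultiplierFeedback f L K U) (hpos : ∀ ξ, ∀ s ∈ K, 0 < f ξ s)
    (l ξ : ℝ) {s : E} (hs : s ∈ K) : slopeCost f L U l ξ * f ξ s ≤ L ξ s + l :=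
  (le_div_iff₀ (hpos ξ s hs)).1 (hU.isMinOn l ξ hs)

theorem slopeCost_mul_eq (hU : IsMultiplierFeedback f L K U) (hpos : ∀ ξ, ∀ s ∈ K, 0 < f ξ s)
    (l ξ : ℝ) : slopeCost f L U l ξ * f ξ (U l ξ) = L ξ (U l ξ) + l :=
  div_mul_cancel₀ _ (hpos ξ _ (hU.mem l ξ)).ne'

theorem hasDerivAt_integral_slopeCost (hU : IsMultiplierFeedback f L K U)
    (hf : Continuous (uncurry f)) (hL : Continuous (uncurry L)) (hpos : ∀ ξ, ∀ s ∈ K, 0 < f ξ s)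
    (l X : ℝ) : HasDerivAt (fun X => ∫ ξ in x0..X, slopeCost f L U l ξ) (slopeCost f L U l X) X :=
  (((hU.continuous_slopeCost hf hL hpos).uncurry_left l).integral_hasStrictDerivAt x0 X).hasDerivAt

theorem exists_travelTime_eq [MeasurableSpace E] {x : ℝ → ℝ} {u : ℝ → E}
    (hU : IsMultiplierFeedback f L K U) (hx : IsAdmissible_s16 f K T x0 x u) (hT : 0 ≤ T)
    (hf : Continuous (uncurry f)) (hpos : ∀ ξ, ∀ s ∈ K, 0 < f ξ s) {l₀ l₁ : ℝ}
    (hspeed : ∀ t ∈ Ioo 0 T, ∀ s ∈ K,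
      f (x t) s ∈ Icc (f (x t) (U l₀ (x t))) (f (x t) (U l₁ (x t)))) :
    ∃ l ∈ uIcc l₀ l₁, travelTime (fun ξ => f ξ (U l ξ)) x0 (x T) = T := by
  have hF l : Continuous fun ξ => f ξ (U l ξ) := (hU.continuous_speed hf).uncurry_left l
  have hFpos l ξ : 0 < f ξ (U l ξ) := hpos ξ _ (hU.mem l ξ)
  have hcont : Continuous fun l => travelTime (fun ξ => f ξ (U l ξ)) x0 (x T) :=
    (hU.continuous_travelTime hf hpos).comp (by fun_prop : Continuous fun l => (l, x T))
  have hle := hx.le_travelTime hT (hF l₀) (hFpos l₀) fun t ht s hs => (hspeed t ht s hs).1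
  have hge := hx.travelTime_le hT (hF l₁) (hFpos l₁) fun t ht s hs => (hspeed t ht s hs).2
  exact intermediate_value_uIcc hcont.continuousOn (mem_uIcc_of_ge hge hle)

theorem exists_isAdmissible [MeasurableSpace E] [BorelSpace E] (hU : IsMultiplierFeedback f L K U)
    (hf : Continuous (uncurry f)) (hpos : ∀ ξ, ∀ s ∈ K, 0 < f ξ s) {A : ℝ}
    (hgrowth : ∀ ξ, ∀ s ∈ K, f ξ s ≤ A * √(1 + ξ ^ 2)) (l : ℝ) :
    ∃ x, (IsAdmissible_s16 f K T x0 x fun t => U l (x t)) ∧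
      ∀ X, x (travelTime (fun ξ => f ξ (U l ξ)) x0 X) = X := by
  obtain ⟨x, hx, hxX⟩ := exists_hasDerivAt_of_pos_of_linear_growth (x0 := x0)
    ((hU.continuous_speed hf).uncurry_left l) (fun ξ => hpos ξ _ (hU.mem l ξ))
    fun ξ => hgrowth ξ _ (hU.mem l ξ)
  have hx0 : x 0 = x0 := by simpa [travelTime] using hxX x0
  exact ⟨x, isAdmissible_feedback hf (hU.continuous.uncurry_left l) (hU.mem l) hx0 hx, hxX⟩

end IsMultiplierFeedback

end Feedback

section Duality

variable {E : Type*} [TopologicalSpace E] [TopologicalSpace.PseudoMetrizableSpace E]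
  [SecondCountableTopology E] [MeasurableSpace E] [BorelSpace E] {f L : ℝ → E → ℝ} {K : Set E}
  {U : ℝ → ℝ → E} {T x0 : ℝ}

namespace IsMultiplierFeedback

theorem dualBound_le (hU : IsMultiplierFeedback f L K U) (hT : 0 ≤ T) (hK : IsCompact K)
    (hf : Continuous (uncurry f)) (hL : Continuous (uncurry L)) (hpos : ∀ ξ, ∀ s ∈ K, 0 < f ξ s)
    {x : ℝ → ℝ} {u : ℝ → E} (hx : IsAdmissible_s16 f K T x0 x u) (l : ℝ) :
    dualBound f L U T x0 l (x T) ≤ ∫ t in Ioo 0 T, L (x t) (u t) := by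
  have hint := hx.integrableOn_comp hK hL
  have h := hx.sub_le_setIntegral hT (hU.hasDerivAt_integral_slopeCost (x0 := x0) hf hL hpos l)
    ((hU.continuous_slopeCost hf hL hpos).uncurry_left l) (hint.add (integrable_const l))
    (hx.ae_mem.mono fun t ht => hU.slopeCost_mul_le hpos l (x t) ht)
  simp only [Pi.add_apply, integral_add hint (integrable_const l), setIntegral_const,
    Real.volume_real_Ioo_of_le hT, intervalIntegral.integral_same, smul_eq_mul] at h
  simp only [dualBound]
  linarith

theorem setIntegral_eq_dualBound (hU : IsMultiplierFeedback f L K U) (hT : 0 ≤ T)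
    (hK : IsCompact K) (hf : Continuous (uncurry f)) (hL : Continuous (uncurry L))
    (hpos : ∀ ξ, ∀ s ∈ K, 0 < f ξ s) {x : ℝ → ℝ} {l : ℝ}
    (hx : IsAdmissible_s16 f K T x0 x fun t => U l (x t)) :
    ∫ t in Ioo 0 T, L (x t) (U l (x t)) = dualBound f L U T x0 l (x T) := by
  have h := (hx.integrableOn_and_setIntegral_mul_speed hT
    (hU.hasDerivAt_integral_slopeCost (x0 := x0) hf hL hpos l)
    ((hU.continuous_slopeCost hf hL hpos).uncurry_left l)).2
  simp only [hU.slopeCost_mul_eq hpos, integral_add (hx.integrableOn_comp hK hL)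
    (integrable_const l), setIntegral_const, Real.volume_real_Ioo_of_le hT,
    intervalIntegral.integral_same, smul_eq_mul] at h
  simp only [dualBound]
  linarith

end IsMultiplierFeedback

theorem exists_optimal_of_isMultiplierFeedback (hT : 0 ≤ T) (hK : IsCompact K)
    (hf : Continuous (uncurry f)) (hL : Continuous (uncurry L)) (hpos : ∀ ξ, ∀ s ∈ K, 0 < f ξ s)
    {A : ℝ} (hgrowth : ∀ ξ, ∀ s ∈ K, f ξ s ≤ A * √(1 + ξ ^ 2)) (hU : IsMultiplierFeedback f L K U)
    (hspeed : ∀ X, ∃ l₀ l₁, ∀ ξ ∈ Icc x0 X, ∀ s ∈ K,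
      f ξ s ∈ Icc (f ξ (U l₀ ξ)) (f ξ (U l₁ ξ))) :
    ∃ x u, IsAdmissible_s16 f K T x0 x u ∧ ∀ y v, IsAdmissible_s16 f K T x0 y v →
      ∫ t in Ioo 0 T, L (x t) (u t) ≤ ∫ t in Ioo 0 T, L (y t) (v t) := by
  have hA : 0 ≤ A := (pos_of_mul_pos_left ((hpos 0 _ (hU.mem 0 0)).trans_le
    (hgrowth 0 _ (hU.mem 0 0))) (Real.sqrt_nonneg _)).le
  set B := Real.sinh (Real.arsinh x0 + A * T)
  have hmem {y v} (hy : IsAdmissible_s16 f K T x0 y v) {t : ℝ} (ht : t ∈ Icc 0 T) : y t ∈ Icc x0 B :=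
    hy.mem_Icc hA (fun ξ s hs => (hpos ξ s hs).le) hgrowth ht
  obtain ⟨l₀, l₁, hl⟩ := hspeed B
  let S := (uIcc l₀ l₁ ×ˢ Icc x0 B) ∩ {p | travelTime (fun ξ => f ξ (U p.1 ξ)) x0 p.2 = T}
  have hS : IsCompact S := (isCompact_uIcc.prod isCompact_Icc).inter_right
    (isClosed_eq (hU.continuous_travelTime hf hpos) continuous_const)
  have hmultiplier {y v} (hy : IsAdmissible_s16 f K T x0 y v) : ∃ l, (l, y T) ∈ S := by
    obtain ⟨l, hl, hlT⟩ := hU.exists_travelTime_eq hy hT hf hpos fun t ht =>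
      hl _ (hmem hy (Ioo_subset_Icc_self ht))
    exact ⟨l, ⟨hl, hmem hy (right_mem_Icc.2 hT)⟩, hlT⟩
  have hSne : S.Nonempty := by
    obtain ⟨x, hx, -⟩ := hU.exists_isAdmissible (T := T) (x0 := x0) hf hpos hgrowth 0
    obtain ⟨l, hlS⟩ := hmultiplier hx
    exact ⟨_, hlS⟩
  obtain ⟨⟨l, X⟩, ⟨-, hlX⟩, hmin⟩ :=
    hS.exists_isMinOn hSne (hU.continuous_dualBound (T := T) (x0 := x0) hf hL hpos).continuousOn
  obtain ⟨x, hx, hxX⟩ := hU.exists_isAdmissible hf hpos hgrowth l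
  have hxT : x T = X := by rw [← hxX X, hlX]
  refine ⟨x, _, hx, fun y v hy => ?_⟩
  obtain ⟨l', hl'⟩ := hmultiplier hy
  calc ∫ t in Ioo 0 T, L (x t) (U l (x t))
      = dualBound f L U T x0 l X := hxT ▸ hU.setIntegral_eq_dualBound hT hK hf hL hpos hx
    _ ≤ dualBound f L U T x0 l' (y T) := hmin hl'
    _ ≤ ∫ t in Ioo 0 T, L (y t) (v t) := hU.dualBound_le hT hK hf hL hpos hy l'

end Duality

section LinearGrowth

theorem exists_le_mul_one_add_abs_of_lipschitzWith {g : ℝ → ℝ} {C : NNReal}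
    (hg : LipschitzWith C g) : ∃ A, ∀ ξ, g ξ ≤ A * (1 + |ξ|) := by
  refine ⟨|g 0| + C, fun ξ => ?_⟩
  have := hg.le_add_mul ξ 0
  rw [Real.dist_eq, sub_zero] at this
  nlinarith [le_abs_self (g 0), abs_nonneg ξ, abs_nonneg (g 0), C.2]

end LinearGrowth

section QuadraticCubic

variable {a0 a1 c q l : ℝ}

theorem pow_three_lt_midpoint {r s w : ℝ} (hr : 0 < r) (hs : 0 < s) (hrs : r ≠ s) (hw : 0 < w)
    (hw2 : w ^ 2 = (r ^ 2 + s ^ 2) / 2) : w ^ 3 < (r ^ 3 + s ^ 3) / 2 := by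
  -- Twice the gap between `t ^ 3`, as a function of `t ^ 2`, and its tangent at `w ^ 2`.
  have htangent (t : ℝ) : (t - w) ^ 2 * (2 * t + w) = 2 * t ^ 3 - 3 * w * t ^ 2 + w ^ 3 := by ring
  have hgap : 2 * (r ^ 3 + s ^ 3) - 4 * w ^ 3
      = (r - w) ^ 2 * (2 * r + w) + (s - w) ^ 2 * (2 * s + w) := by
    rw [htangent, htangent]
    linear_combination -6 * w * hw2
  have hgap_pos : 0 < (r - w) ^ 2 * (2 * r + w) + (s - w) ^ 2 * (2 * s + w) := by
    rcases eq_or_ne r w with rfl | hrw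
    · exact add_pos_of_nonneg_of_pos (by positivity) (by positivity [sub_ne_zero.2 hrs.symm])
    · exact add_pos_of_pos_of_nonneg (by positivity [sub_ne_zero.2 hrw]) (by positivity)
  linarith

theorem eq_of_isMinOn_quadratic_add_cubic {b d : ℝ} (ha0 : 0 < a0) (hbd : 0 < d ∨ b < 0) {r s : ℝ}
    (hr : r ∈ Icc a0 a1) (hs : s ∈ Icc a0 a1)
    (hr_min : IsMinOn (fun w => b * w ^ 2 + d * w ^ 3 + l) (Icc a0 a1) r)
    (hs_min : IsMinOn (fun w => b * w ^ 2 + d * w ^ 3 + l) (Icc a0 a1) s) : r = s := by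
  have hr0 : 0 < r := ha0.trans_le hr.1
  have hs0 : 0 < s := ha0.trans_le hs.1
  have heq : b * r ^ 2 + d * r ^ 3 + l = b * s ^ 2 + d * s ^ 3 + l :=
    (hr_min hs).antisymm (hs_min hr)
  by_contra hrs
  rcases lt_or_ge 0 d with hd | hd
  · set w := √((r ^ 2 + s ^ 2) / 2)
    have hw0 : 0 < w := by positivity
    have hw2 : w ^ 2 = (r ^ 2 + s ^ 2) / 2 := Real.sq_sqrt (by positivity)
    have hw : w ∈ Icc a0 a1 :=
      ⟨Real.le_sqrt_of_sq_le (by nlinarith [hr.1, hs.1]),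
        Real.sqrt_le_iff.2 ⟨hr0.le.trans hr.2, by nlinarith [hr.2, hs.2]⟩⟩
    have hle : b * r ^ 2 + d * r ^ 3 + l ≤ b * w ^ 2 + d * w ^ 3 + l := hr_min hw
    have hlt := mul_lt_mul_of_pos_left (pow_three_lt_midpoint hr0 hs0 hrs hw0 hw2) hd
    rw [hw2] at hle
    linarith
  · have hb : b < 0 := hbd.resolve_left hd.not_gt
    have hanti : StrictAntiOn (fun w => b * w ^ 2 + d * w ^ 3 + l) (Ici 0) := by
      intro w (hw : 0 ≤ w) v _ hwv
      exact add_lt_add_left (add_lt_add_of_lt_of_le (mul_lt_mul_of_neg_left (by gcongr) hb)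
        (mul_le_mul_of_nonpos_left (by gcongr) hd)) l
    exact hrs (hanti.injOn hr0.le hs0.le heq)

theorem eq_of_isMinOn_quadratic_cubic_slope (ha0 : 0 < a0) (hq : 0 < q) (hcq : c < q) {r s : ℝ}
    (hr : r ∈ Icc a0 a1) (hs : s ∈ Icc a0 a1)
    (hr_min : IsMinOn (fun w => (c * w ^ 2 + w ^ 3 + l) / (q * w ^ 2 + w ^ 3)) (Icc a0 a1) r)
    (hs_min : IsMinOn (fun w => (c * w ^ 2 + w ^ 3 + l) / (q * w ^ 2 + w ^ 3)) (Icc a0 a1) s) :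
    r = s := by
  obtain ⟨m, hm⟩ : ∃ m, (c * r ^ 2 + r ^ 3 + l) / (q * r ^ 2 + r ^ 3) = m := ⟨_, rfl⟩
  have hm' : (c * s ^ 2 + s ^ 3 + l) / (q * s ^ 2 + s ^ 3) = m :=
    ((hs_min hr).antisymm (hr_min hs)).trans hm
  have hspeed_pos w (hw : w ∈ Icc a0 a1) : 0 < q * w ^ 2 + w ^ 3 := by
    positivity [ha0.trans_le hw.1]
  have hdiff : (fun w => c * w ^ 2 + w ^ 3 + l - m * (q * w ^ 2 + w ^ 3))
      = fun w => (c - m * q) * w ^ 2 + (1 - m) * w ^ 3 + l := by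
    ext w
    ring
  have hcoeff : 0 < 1 - m ∨ c - m * q < 0 := by
    refine (lt_or_ge m 1).imp sub_pos.2 fun hm1 => ?_
    nlinarith
  exact eq_of_isMinOn_quadratic_add_cubic ha0 hcoeff hr hs
    (hdiff ▸ isMinOn_sub_mul_of_isMinOn_div hspeed_pos hr hr_min hm)
    (hdiff ▸ isMinOn_sub_mul_of_isMinOn_div hspeed_pos hs hs_min hm')

theorem strictMonoOn_quadratic_cubic_slope (hq : 0 < q) (hcq : c < q) :
    StrictMonoOn (fun s => (c * s ^ 2 + s ^ 3 + 0) / (q * s ^ 2 + s ^ 3)) (Ioi 0) := by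
  have hslope {s : ℝ} (hs : 0 < s) :
      (c * s ^ 2 + s ^ 3 + 0) / (q * s ^ 2 + s ^ 3) = 1 - (q - c) / (q + s) := by
    have : 0 < q + s := by positivity
    field
  intro s (hs : 0 < s) r (hr : 0 < r) hsr
  simp only [hslope hs, hslope hr]
  gcongr

theorem strictAntiOn_quadratic_cubic_slope (hq : 0 < q) (hcq : c < q)
    (hl : (q - c) * a1 ^ 2 ≤ l) :
    StrictAntiOn (fun s => (c * s ^ 2 + s ^ 3 + l) / (q * s ^ 2 + s ^ 3)) (Ioc 0 a1) := by
  have hslope {s : ℝ} (hs : 0 < s) : (c * s ^ 2 + s ^ 3 + l) / (q * s ^ 2 + s ^ 3)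
      = 1 + (l - (q - c) * s ^ 2) / (q * s ^ 2 + s ^ 3) := by
    have : 0 < q + s := by positivity
    field
  intro s ⟨hs, hs1⟩ r ⟨hr, _⟩ hsr
  simp only [hslope hs, hslope hr]
  have hqc : 0 < q - c := sub_pos.2 hcq
  have hnonneg : 0 ≤ l - (q - c) * s ^ 2 := by
    rw [sub_nonneg]
    grw [hs1, hl]
  have hnum : l - (q - c) * r ^ 2 < l - (q - c) * s ^ 2 := by gcongr
  have hden : q * s ^ 2 + s ^ 3 ≤ q * r ^ 2 + r ^ 3 := by gcongr
  gcongr 1 + ?_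
  exact div_lt_div₀ hnum hden hnonneg (by positivity)

theorem quadratic_cubic_le_mul_sqrt {A ξ s : ℝ} (hq : q ≤ A * (1 + |ξ|)) (hA : 0 ≤ A)
    (hs : 0 ≤ s) (hsa : s ≤ a1) :
    q * s ^ 2 + s ^ 3 ≤ (2 * A * a1 ^ 2 + a1 ^ 3) * √(1 + ξ ^ 2) := by
  have hone : 1 ≤ √(1 + ξ ^ 2) := Real.one_le_sqrt.2 (by nlinarith [sq_nonneg ξ])
  have habs : |ξ| ≤ √(1 + ξ ^ 2) := Real.abs_le_sqrt (by linarith)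
  have ha1 : 0 ≤ a1 ^ 3 := pow_nonneg (hs.trans hsa) 3
  calc q * s ^ 2 + s ^ 3
      ≤ A * (1 + |ξ|) * a1 ^ 2 + a1 ^ 3 * 1 := by grw [hq, hsa, mul_one]
    _ ≤ A * (√(1 + ξ ^ 2) + √(1 + ξ ^ 2)) * a1 ^ 2 + a1 ^ 3 * √(1 + ξ ^ 2) := by gcongr
    _ = _ := by ring

theorem exists_multiplier_speed_mem_Icc {c q : ℝ → ℝ} {U : ℝ → ℝ → ℝ} (ha0 : 0 < a0)
    (hc : Continuous c) (hq : Continuous q) (hcq : ∀ ξ, c ξ < q ξ) (hqpos : ∀ ξ, 0 < q ξ)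
    (hU : IsMultiplierFeedback (fun ξ s => q ξ * s ^ 2 + s ^ 3) (fun ξ s => c ξ * s ^ 2 + s ^ 3)
      (Icc a0 a1) U) (x0 X : ℝ) :
    ∃ l₀ l₁, ∀ ξ ∈ Icc x0 X, ∀ s ∈ Icc a0 a1, q ξ * s ^ 2 + s ^ 3 ∈
      Icc (q ξ * U l₀ ξ ^ 2 + U l₀ ξ ^ 3) (q ξ * U l₁ ξ ^ 2 + U l₁ ξ ^ 3) := by
  obtain ⟨l₁, hl₁⟩ := (isCompact_Icc (a := x0) (b := X)).bddAbove_image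
    (f := fun ξ => (q ξ - c ξ) * a1 ^ 2) (by fun_prop)
  refine ⟨0, l₁, fun ξ hξ s hs => ?_⟩
  have hpos {r : ℝ} (hr : r ∈ Icc a0 a1) : 0 < r := ha0.trans_le hr.1
  have hqξ := hqpos ξ
  have hs0 := hpos hs
  have hU₀0 := hpos (hU.mem 0 ξ)
  have hU₀ : U 0 ξ ≤ s := ((strictMonoOn_quadratic_cubic_slope hqξ (hcq ξ)).le_iff_le
    hU₀0 hs0).1 (hU.isMinOn 0 ξ hs)
  have hU₁ : s ≤ U l₁ ξ := ((strictAntiOn_quadratic_cubic_slope hqξ (hcq ξ)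
    (hl₁ (mem_image_of_mem _ hξ))).le_iff_ge ⟨hpos (hU.mem l₁ ξ), (hU.mem l₁ ξ).2⟩
    ⟨hs0, hs.2⟩).1 (hU.isMinOn l₁ ξ hs)
  exact ⟨by gcongr, by gcongr⟩

end QuadraticCubic

theorem stmt_16_general (T : ℝ) (hT : 0 ≤ T) (x0 : ℝ) (a0 a1 : ℝ) (ha0 : 0 < a0) (ha : a0 ≤ a1)
    (c q : ℝ → ℝ) (hc : Continuous c) (hq : Continuous q)
    (hgrowth : ∃ A, ∀ ξ, q ξ ≤ A * (1 + |ξ|)) (hcq : ∀ ξ, c ξ < q ξ) (hqpos : ∀ ξ, 0 < q ξ) :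
    ∃ x u, IsAdmissible_s16 (fun ξ s => q ξ * s ^ 2 + s ^ 3) (Icc a0 a1) T x0 x u ∧
      ∀ y v, IsAdmissible_s16 (fun ξ s => q ξ * s ^ 2 + s ^ 3) (Icc a0 a1) T x0 y v →
        ∫ t in Ioo 0 T, (c (x t) * u t ^ 2 + u t ^ 3) ≤
          ∫ t in Ioo 0 T, (c (y t) * v t ^ 2 + v t ^ 3) := by
  have hf : Continuous (uncurry fun ξ s => q ξ * s ^ 2 + s ^ 3) := by fun_prop
  have hL : Continuous (uncurry fun ξ s => c ξ * s ^ 2 + s ^ 3) := by fun_prop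
  have hspeed_pos ξ s (hs : s ∈ Icc a0 a1) : 0 < q ξ * s ^ 2 + s ^ 3 := by
    positivity [hqpos ξ, ha0.trans_le hs.1]
  obtain ⟨A, hA⟩ := hgrowth
  have hA0 : 0 ≤ A := by simpa using (hqpos 0).le.trans (hA 0)
  obtain ⟨U, hU⟩ := exists_isMultiplierFeedback isCompact_Icc (nonempty_Icc.2 ha) hf hL hspeed_pos
    fun l ξ s hs r hr hs_min hr_min =>
      eq_of_isMinOn_quadratic_cubic_slope ha0 (hqpos ξ) (hcq ξ) hr hs hr_min hs_min
  exact exists_optimal_of_isMultiplierFeedback hT isCompact_Icc hf hL hspeed_pos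
    (fun ξ s hs => quadratic_cubic_le_mul_sqrt (hA ξ) hA0 (ha0.le.trans hs.1) hs.2) hU
    (exists_multiplier_speed_mem_Icc ha0 hc hq hcq hqpos hU x0)

theorem stmt_16
    (T : ℝ) (hT : 0 < T) (x0 : ℝ)
    (a0 a1 : ℝ) (ha0 : 0 < a0) (ha : a0 ≤ a1)
    (c q : ℝ → ℝ)
    (hc : ∃ Lc : NNReal, LipschitzWith Lc c)
    (hq : ∃ Lq : NNReal, LipschitzWith Lq q)
    (hcq : ∀ x : ℝ, c x < q x) (hqpos : ∀ x : ℝ, 0 < q x) :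
    ∃ (x : ℝ → ℝ) (u : ℝ → ℝ),
      (Measurable u ∧ (∀ᵐ t ∂(volume.restrict (Set.Ioo 0 T)), u t ∈ Set.Icc a0 a1) ∧
       (∃ Lx : NNReal, LipschitzOnWith Lx x (Set.Icc 0 T)) ∧ x 0 = x0 ∧
       (∀ᵐ t ∂(volume.restrict (Set.Ioo 0 T)),
          HasDerivAt x (q (x t) * (u t) ^ 2 + (u t) ^ 3) t)) ∧
      ∀ (y : ℝ → ℝ) (v : ℝ → ℝ),
        (Measurable v ∧ (∀ᵐ t ∂(volume.restrict (Set.Ioo 0 T)), v t ∈ Set.Icc a0 a1) ∧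
         (∃ Ly : NNReal, LipschitzOnWith Ly y (Set.Icc 0 T)) ∧ y 0 = x0 ∧
         (∀ᵐ t ∂(volume.restrict (Set.Ioo 0 T)),
            HasDerivAt y (q (y t) * (v t) ^ 2 + (v t) ^ 3) t)) →
        (∫ t in Set.Ioo 0 T, (c (x t) * (u t) ^ 2 + (u t) ^ 3)) ≤
          (∫ t in Set.Ioo 0 T, (c (y t) * (v t) ^ 2 + (v t) ^ 3)) := by
  obtain ⟨Lc, hc⟩ := hc
  obtain ⟨Lq, hq⟩ := hq
  obtain ⟨x, u, ⟨hu, huK, hxlip, hx0, hx⟩, hmin⟩ := stmt_16_general T hT.le x0 a0 a1 ha0 ha c q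
    hc.continuous hq.continuous (exists_le_mul_one_add_abs_of_lipschitzWith hq) hcq hqpos
  exact ⟨x, u, ⟨hu, huK, hxlip, hx0, hx⟩, fun y v ⟨hv, hvK, hylip, hy0, hy⟩ =>
    hmin y v ⟨hv, hvK, hylip, hy0, hy⟩⟩
end

section
/- Let T > 0, x0 ∈ ℝ, K = [1,2], and let c, β : ℝ → ℝ be Lipschitz functions satisfying β(x) < min{0, c(x)} for every x ∈ ℝ. Then the optimal control problem 'minimize ∫₀ᵀ [c(x(t)) u(t)² + u(t)³] dt over admissible pairs for the state equation x′(t) = (c(x(t)) − β(x(t))) u(t)² + u(t)³' admits at least one solution. -/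
open MeasureTheory

open Set Filter Topology Metric
open scoped NNReal Pointwise

/-!
Add the cost accumulated so far to the state as a further coordinate, so that the cost becomes the
terminal value of that coordinate. The augmented trajectories solve a differential inclusion whose
right-hand side is the epigraph of the cost as a function of the velocity. Along a minimising
sequence they are equi-Lipschitz, hence converge uniformly along a subsequence. If the epigraphs are
closed and convex and depend upper semicontinuously on the state, the limit solves the same
inclusion, because difference quotients are averages of derivatives. A measurable selection turns
the limit back into an admissible pair whose cost is no larger.

For the problem at hand put `s = w ^ 2`. The velocity `(c - β) * s + s ^ (3 / 2)` is a convex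
increasing function of `s`, so `s` is a concave function of the velocity, and the cost is the
velocity plus `β * s` with `β ≤ 0`: it is convex in the velocity.
-/

section Lipschitz

variable {G : Type*} [NormedAddCommGroup G] [NormedSpace ℝ G]

lemma ae_norm_deriv_le_of_lipschitzOnWith {f : ℝ → G} {C : ℝ≥0} {a b : ℝ}
    (hf : LipschitzOnWith C f (Icc a b)) :
    ∀ᵐ t ∂volume.restrict (Ioo a b), ‖deriv f t‖ ≤ C := by
  filter_upwards [ae_restrict_mem measurableSet_Ioo] with t ht
  exact norm_deriv_le_of_lipschitzOn (Icc_mem_nhds ht.1 ht.2) hf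

lemma lipschitzOnWith_integral {f : ℝ → G} {C : ℝ≥0} {a b : ℝ}
    (hf : IntervalIntegrable f volume a b) (hC : ∀ᵐ t ∂volume.restrict (Ioo a b), ‖f t‖ ≤ C) :
    LipschitzOnWith C (fun t ↦ ∫ s in a..t, f s) (Icc a b) := by
  rw [restrict_Ioo_eq_restrict_Icc, ae_restrict_iff' measurableSet_Icc] at hC
  refine LipschitzOnWith.of_dist_le_mul fun s hs t ht ↦ ?_
  have hint : ∀ r ∈ Icc a b, IntervalIntegrable f volume a r := fun r hr ↦
    hf.mono_set (uIcc_subset_uIcc left_mem_uIcc (Icc_subset_uIcc hr))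
  rw [dist_eq_norm, intervalIntegral.integral_interval_sub_left (hint s hs) (hint t ht),
    Real.dist_eq]
  refine intervalIntegral.norm_integral_le_of_norm_le_const_ae ?_
  filter_upwards [hC] with r hr hrs
  exact hr (uIcc_subset_Icc ht hs (uIoc_subset_uIcc hrs))

variable [FiniteDimensional ℝ G]

lemma intervalIntegrable_deriv_of_lipschitzOnWith {f : ℝ → G} {C : ℝ≥0} {a b : ℝ} (hab : a ≤ b)
    (hf : LipschitzOnWith C f (Icc a b)) : IntervalIntegrable (deriv f) volume a b := by
  rw [intervalIntegrable_iff_integrableOn_Ioo_of_le hab]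
  exact Integrable.of_bound (aestronglyMeasurable_deriv f _) C
    (ae_norm_deriv_le_of_lipschitzOnWith hf)

lemma ae_hasDerivAt_deriv_of_lipschitzOnWith {f : ℝ → G} {C : ℝ≥0} {a b : ℝ}
    (hf : LipschitzOnWith C f (Icc a b)) :
    ∀ᵐ t ∂volume.restrict (Ioo a b), HasDerivAt f (deriv f t) t := by
  rw [ae_restrict_iff' measurableSet_Ioo]
  filter_upwards [hf.ae_differentiableWithinAt_of_mem_real] with t hdiff ht
  exact ((hdiff (Ioo_subset_Icc_self ht)).differentiableAt (Icc_mem_nhds ht.1 ht.2)).hasDerivAt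

lemma integral_deriv_eq_sub_of_lipschitzOnWith {f : ℝ → G} {C : ℝ≥0} {a b : ℝ} (hab : a ≤ b)
    (hf : LipschitzOnWith C f (Icc a b)) : ∫ t in a..b, deriv f t = f b - f a := by
  refine (SeparatingDual.eq_iff_forall_dual_eq (R := ℝ)).2 fun ℓ ↦ ?_
  have hlf : LipschitzOnWith (‖ℓ‖₊ * C) (ℓ ∘ f) (uIcc a b) := by
    rw [uIcc_of_le hab]
    exact ℓ.lipschitz.comp_lipschitzOnWith hf
  calc ℓ (∫ t in a..b, deriv f t)
      = ∫ t in a..b, ℓ (deriv f t) :=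
        (ℓ.intervalIntegral_comp_comm (intervalIntegrable_deriv_of_lipschitzOnWith hab hf)).symm
    _ = ∫ t in a..b, deriv (ℓ ∘ f) t := by
        simp only [intervalIntegral.integral_of_le hab, integral_Ioc_eq_integral_Ioo]
        refine integral_congr_ae ?_
        filter_upwards [ae_hasDerivAt_deriv_of_lipschitzOnWith hf] with t ht
        exact (ℓ.hasFDerivAt.comp_hasDerivAt t ht).deriv.symm
    _ = ℓ (f b - f a) := by
        rw [hlf.absolutelyContinuousOnInterval.integral_deriv_eq_sub]
        simp only [Function.comp_apply, map_sub]

lemma slope_mem_of_ae_deriv_mem {f : ℝ → G} {C : ℝ≥0} {a b : ℝ} {Q : Set G} (hab : a < b)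
    (hf : LipschitzOnWith C f (Icc a b)) (hQ : Convex ℝ Q) (hQc : IsClosed Q)
    (hmem : ∀ᵐ t ∂volume.restrict (Ioo a b), deriv f t ∈ Q) : slope f a b ∈ Q := by
  have hint := intervalIntegrable_deriv_of_lipschitzOnWith hab.le hf
  rw [slope_def_module, ← integral_deriv_eq_sub_of_lipschitzOnWith hab.le hf,
    intervalIntegral.integral_of_le hab.le, integral_Ioc_eq_integral_Ioo]
  rw [intervalIntegrable_iff_integrableOn_Ioo_of_le hab.le] at hint
  have havg := hQ.set_average_mem hQc (by simp [hab]) (by simp) hmem hint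
  rwa [setAverage_eq, measureReal_def, Real.volume_Ioo,
    ENNReal.toReal_ofReal (sub_pos.2 hab).le] at havg

lemma dist_le_of_ae_norm_deriv_le {f : ℝ → G} {C : ℝ≥0} {a b m : ℝ} (hab : a ≤ b)
    (hf : LipschitzOnWith C f (Icc a b))
    (hm : ∀ᵐ t ∂volume.restrict (Ioo a b), ‖deriv f t‖ ≤ m) : dist (f b) (f a) ≤ m * (b - a) := by
  rw [dist_eq_norm, ← integral_deriv_eq_sub_of_lipschitzOnWith hab hf,
    ← abs_of_nonneg (sub_nonneg.2 hab)]
  refine intervalIntegral.norm_integral_le_of_norm_le_const_ae ?_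
  rw [restrict_Ioo_eq_restrict_Ioc, ae_restrict_iff' measurableSet_Ioc] at hm
  rwa [uIoc_of_le hab]

lemma lipschitzOnWith_of_ae_norm_deriv_le {f : ℝ → G} {C C' : ℝ≥0} {a b : ℝ}
    (hf : LipschitzOnWith C f (Icc a b))
    (hC' : ∀ᵐ t ∂volume.restrict (Ioo a b), ‖deriv f t‖ ≤ C') : LipschitzOnWith C' f (Icc a b) := by
  have hordered : ∀ s ∈ Icc a b, ∀ t ∈ Icc a b, s ≤ t → dist (f s) (f t) ≤ C' * dist s t := by
    intro s hs t ht hst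
    rw [dist_comm, dist_comm s, Real.dist_eq, abs_of_nonneg (sub_nonneg.2 hst)]
    exact dist_le_of_ae_norm_deriv_le hst (hf.mono (Icc_subset_Icc hs.1 ht.2))
      (ae_restrict_of_ae_restrict_of_subset (Ioo_subset_Ioo hs.1 ht.2) hC')
  refine LipschitzOnWith.of_dist_le_mul fun s hs t ht ↦ ?_
  rcases le_total s t with hst | hts
  · exact hordered s hs t ht hst
  · simpa only [dist_comm] using hordered t ht s hs hts

end Lipschitz

section DifferentialInclusion

variable {G : Type*} [NormedAddCommGroup G] [NormedSpace ℝ G] [FiniteDimensional ℝ G]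
  {y : ℕ → ℝ → G} {g : ℝ → G} {C : ℝ≥0} {a b t : ℝ} {F : G → Set G}

lemma eventually_slope_mem_of_tendsto {Q : Set G} (hQ : Convex ℝ Q) (hQc : IsClosed Q)
    (hy : ∀ n, LipschitzOnWith C (y n) (Icc a b))
    (hyF : ∀ n, ∀ᵐ s ∂volume.restrict (Ioo a b), deriv (y n) s ∈ F (y n s))
    (hlim : ∀ s ∈ Icc a b, Tendsto (fun n ↦ y n s) atTop (𝓝 (g s))) (ht : t ∈ Ioo a b)
    (hFQ : ∀ᶠ ξ in 𝓝 (g t), F ξ ⊆ Q) : ∀ᶠ r in 𝓝[>] t, slope g t r ∈ Q := by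
  obtain ⟨η, hη, hball⟩ := Metric.eventually_nhds_iff.1 hFQ
  have hnear : ∀ᶠ r in 𝓝[>] t, C * (r - t) < η / 2 := by
    refine (Continuous.tendsto' (by fun_prop) t 0 (by simp)).mono_left nhdsWithin_le_nhds
      |>.eventually_lt_const (by positivity)
  filter_upwards [hnear, Ioo_mem_nhdsGT ht.2] with r hr hrb
  have hsub : Icc t r ⊆ Icc a b := Icc_subset_Icc ht.1.le hrb.2.le
  have hslope : Tendsto (fun n ↦ slope (y n) t r) atTop (𝓝 (slope g t r)) :=
    ((hlim r (hsub (right_mem_Icc.2 hrb.1.le))).sub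
      (hlim t (hsub (left_mem_Icc.2 hrb.1.le)))).const_smul _
  refine hQc.mem_of_tendsto hslope ?_
  filter_upwards [(hlim t (Ioo_subset_Icc_self ht)).eventually (ball_mem_nhds _ (half_pos hη))]
    with n hn
  refine slope_mem_of_ae_deriv_mem hrb.1 ((hy n).mono hsub) hQ hQc ?_
  filter_upwards [ae_restrict_of_ae_restrict_of_subset (Ioo_subset_Ioo ht.1.le hrb.2.le) (hyF n),
    ae_restrict_mem measurableSet_Ioo] with s hsF hs
  refine hball ?_ hsF
  calc dist (y n s) (g t)
      ≤ dist (y n s) (y n t) + dist (y n t) (g t) := dist_triangle _ _ _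
    _ ≤ C * (r - t) + dist (y n t) (g t) := by
        gcongr
        refine ((hy n).dist_le_mul s (hsub (Ioo_subset_Icc_self hs)) t
          (Ioo_subset_Icc_self ht)).trans ?_
        rw [Real.dist_eq, abs_of_pos (sub_pos.2 hs.1)]
        gcongr
        exact hs.2.le
    _ < η / 2 + η / 2 := add_lt_add hr hn
    _ = η := add_halves η

lemma hasDerivAt_mem_of_tendsto {d : G} (hFc : Convex ℝ (F (g t))) (hFcl : IsClosed (F (g t)))
    (hFusc : ∀ ε > 0, ∀ᶠ ξ in 𝓝 (g t), F ξ ⊆ cthickening ε (F (g t)))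
    (hy : ∀ n, LipschitzOnWith C (y n) (Icc a b))
    (hyF : ∀ n, ∀ᵐ s ∂volume.restrict (Ioo a b), deriv (y n) s ∈ F (y n s))
    (hlim : ∀ s ∈ Icc a b, Tendsto (fun n ↦ y n s) atTop (𝓝 (g s))) (ht : t ∈ Ioo a b)
    (hg : HasDerivAt g d t) : d ∈ F (g t) := by
  rw [← hFcl.closure_eq, closure_eq_iInter_cthickening]
  refine mem_iInter₂.2 fun ε hε ↦ isClosed_cthickening.mem_of_tendsto
    (hasDerivAt_iff_tendsto_slope_left_right.1 hg).2 ?_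
  exact eventually_slope_mem_of_tendsto (hFc.cthickening ε) isClosed_cthickening hy hyF hlim ht
    (hFusc ε hε)

end DifferentialInclusion

section ArzelaAscoli

variable {X : Type*} [MetricSpace X] [ProperSpace X]

lemma exists_subseq_tendstoUniformlyOn_of_lipschitzOnWith {y : ℕ → ℝ → X} {C : ℝ≥0} {a b R : ℝ}
    {x₀ : X} (hab : a ≤ b) (hy : ∀ n, LipschitzOnWith C (y n) (Icc a b))
    (hy₀ : ∀ n, dist (y n a) x₀ ≤ R) :
    ∃ (φ : ℕ → ℕ) (g : ℝ → X), StrictMono φ ∧ LipschitzWith C g ∧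
      TendstoUniformlyOn (fun n ↦ y (φ n)) g atTop (Icc a b) := by
  have hrestrict (n : ℕ) : LipschitzWith C ((Icc a b).domRestrict (y n)) :=
    lipschitzOnWith_iff_restrict.1 (hy n)
  let Y (n : ℕ) : BoundedContinuousFunction (Icc a b) X :=
    BoundedContinuousFunction.mkOfCompact ⟨_, (hrestrict n).continuous⟩
  have hmem : ∀ n, ∀ t ∈ Icc a b, y n t ∈ closedBall x₀ (C * (b - a) + R) := by
    intro n t ht
    refine (dist_triangle _ (y n a) _).trans (add_le_add ?_ (hy₀ n))
    refine ((hy n).dist_le_mul t ht a (left_mem_Icc.2 hab)).trans ?_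
    rw [Real.dist_eq, abs_of_nonneg (sub_nonneg.2 ht.1)]
    gcongr
    exact ht.2
  have hcompact : IsCompact (closure (range Y)) := by
    refine BoundedContinuousFunction.arzela_ascoli _
      (isCompact_closedBall x₀ (C * (b - a) + R)) (range Y) ?_ ?_
    · rintro _ t ⟨n, rfl⟩
      exact hmem n t t.2
    · refine (LipschitzWith.uniformEquicontinuous (K := C) _ ?_).equicontinuous
      rintro ⟨_, n, rfl⟩
      exact hrestrict n
  obtain ⟨g, -, φ, hφ, hg⟩ := hcompact.tendsto_subseq fun n ↦ subset_closure (mem_range_self n)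
  have hunif := BoundedContinuousFunction.tendsto_iff_tendstoUniformly.1 hg
  have hgLip : LipschitzWith C g := LipschitzWith.of_dist_le_mul fun s t ↦
    le_of_tendsto ((hunif.tendsto_at s).dist (hunif.tendsto_at t))
      (Eventually.of_forall fun n ↦ (hrestrict (φ n)).dist_le_mul s t)
  refine ⟨φ, IccExtend hab g, hφ, ?_, ?_⟩
  · simpa only [mul_one] using! hgLip.comp (LipschitzWith.projIcc hab)
  · have hcoe : IccExtend hab g ∘ ((↑) : Icc a b → ℝ) = g := funext (IccExtend_val hab g)
    rw [tendstoUniformlyOn_iff_tendstoUniformly_comp_coe, hcoe]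
    exact hunif

end ArzelaAscoli

section MeasurableSelection

variable {α : Type*} [MeasurableSpace α] {g : α → ℝ → ℝ} {U V : Set ℝ}

lemma measurable_sInf_image_of_isCompact (hV : IsCompact V) (hV₀ : V.Nonempty)
    (hgm : ∀ w ∈ V, Measurable fun a ↦ g a w) (hgc : ∀ a, ContinuousOn (g a) V) :
    Measurable fun a ↦ sInf (g a '' V) := by
  obtain ⟨D, hDV, hD, hVD⟩ :=
    (TopologicalSpace.IsSeparable.of_separableSpace V).exists_countable_dense_subset
  refine measurable_of_Iio fun r ↦ ?_
  have hpre : (fun a ↦ sInf (g a '' V)) ⁻¹' Iio r = ⋃ w ∈ D, {a | g a w < r} := by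
    ext a
    simp only [mem_preimage, mem_Iio, mem_iUnion, exists_prop, mem_ofPred_eq]
    rw [csInf_lt_iff (hV.image_of_continuousOn (hgc a)).bddBelow (hV₀.image _), exists_mem_image]
    refine ⟨fun ⟨w, hw, hwr⟩ ↦ ?_, fun ⟨w, hw, hwr⟩ ↦ ⟨w, hDV hw, hwr⟩⟩
    have hnear : ∀ᶠ v in 𝓝[D] w, g a v < r :=
      ((hgc a w hw).mono hDV).eventually_lt_const hwr
    have : (𝓝[D] w).NeBot := mem_closure_iff_nhdsWithin_neBot.1 (hVD hw)
    exact (hnear.and self_mem_nhdsWithin).exists.imp fun v hv ↦ ⟨hv.2, hv.1⟩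
  rw [hpre]
  exact .biUnion hD fun w hw ↦ measurableSet_lt (hgm w (hDV hw)) measurable_const

lemma sInf_image_le_sInf_image_iff {h : ℝ → ℝ} (hV : IsCompact V) (hV₀ : V.Nonempty)
    (hhc : ContinuousOn h V) (hU₀ : U.Nonempty) (hhU : BddBelow (h '' U)) :
    sInf (h '' V) ≤ sInf (h '' U) ↔ ∃ w ∈ V, IsMinOn h U w := by
  have hmin (w : ℝ) : h w ≤ sInf (h '' U) ↔ IsMinOn h U w := by
    rw [le_csInf_iff hhU (hU₀.image h), forall_mem_image]
    rfl
  obtain ⟨v, hv, hvinf⟩ := hV.exists_sInf_image_eq hV₀ hhc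
  refine ⟨fun hle ↦ ⟨v, hv, (hmin v).1 (hvinf ▸ hle)⟩, fun ⟨w, hw, hwmin⟩ ↦ ?_⟩
  exact (csInf_le (hV.image_of_continuousOn hhc).bddBelow (mem_image_of_mem h hw)).trans
    ((hmin w).2 hwmin)

lemma exists_isLeast_setOf_isMinOn {h : ℝ → ℝ} (hU : IsCompact U) (hU₀ : U.Nonempty)
    (hhc : ContinuousOn h U) : ∃ w, IsLeast {w ∈ U | IsMinOn h U w} w := by
  obtain ⟨v, hv, hvmin⟩ := hU.exists_isMinOn hU₀ hhc
  have hset : {w ∈ U | IsMinOn h U w} = U ∩ h ⁻¹' Iic (h v) := by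
    ext w
    exact and_congr_right fun _ ↦ ⟨fun hw ↦ hw hv,
      fun hw z hz ↦ show h w ≤ h z from le_trans hw (hvmin hz)⟩
  rw [hset]
  exact (hU.of_isClosed_subset (hhc.preimage_isClosed_of_isClosed hU.isClosed isClosed_Iic)
    inter_subset_left).exists_isLeast ⟨v, hv, le_refl (h v)⟩

-- The least minimiser is measurable: it is at most `r` iff minimising over `U ∩ Iic r` does as
-- well as minimising over `U`.
lemma exists_measurable_isMinOn (hU : IsCompact U) (hU₀ : U.Nonempty)
    (hgm : ∀ w ∈ U, Measurable fun a ↦ g a w) (hgc : ∀ a, ContinuousOn (g a) U) :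
    ∃ u : α → ℝ, Measurable u ∧ ∀ a, u a ∈ U ∧ IsMinOn (g a) U (u a) := by
  choose u hu using fun a ↦ exists_isLeast_setOf_isMinOn hU hU₀ (hgc a)
  refine ⟨u, measurable_of_Iic fun r ↦ ?_, fun a ↦ (hu a).1⟩
  have hpre : u ⁻¹' Iic r = {a | ∃ w ∈ U ∩ Iic r, IsMinOn (g a) U w} := by
    ext a
    exact ⟨fun hr ↦ ⟨u a, ⟨(hu a).1.1, hr⟩, (hu a).1.2⟩,
      fun ⟨w, hw, hwmin⟩ ↦ ((hu a).2 ⟨hw.1, hwmin⟩).trans hw.2⟩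
  rcases (U ∩ Iic r).eq_empty_or_nonempty with hempty | hne
  · simp only [hpre, hempty, mem_empty_iff_false, false_and, exists_false, ofPred_false,
      MeasurableSet.empty]
  have hUr : IsCompact (U ∩ Iic r) := hU.inter_right isClosed_Iic
  have hgUr (a : α) : ContinuousOn (g a) (U ∩ Iic r) := (hgc a).mono inter_subset_left
  simp only [hpre, ← sInf_image_le_sInf_image_iff hUr hne (hgUr _) hU₀
    (hU.image_of_continuousOn (hgc _)).bddBelow]
  exact measurableSet_le
    (measurable_sInf_image_of_isCompact hUr hne (fun w hw ↦ hgm w hw.1) hgUr)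
    (measurable_sInf_image_of_isCompact hU hU₀ hgm hgc)

end MeasurableSelection

section Gronwall

variable {G : Type*} [NormedAddCommGroup G] [NormedSpace ℝ G] [FiniteDimensional ℝ G]

lemma eventually_slope_norm_lt_of_ae_norm_deriv_le {f : ℝ → G} {h : ℝ → ℝ} {C : ℝ≥0}
    {a b t r : ℝ} (hf : LipschitzOnWith C f (Icc a b)) (hh : ContinuousOn h (Icc a b))
    (hfh : ∀ᵐ s ∂volume.restrict (Ioo a b), ‖deriv f s‖ ≤ h s) (ht : t ∈ Ico a b) (hr : h t < r) :
    ∀ᶠ z in 𝓝[>] t, (z - t)⁻¹ * (‖f z‖ - ‖f t‖) < r := by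
  obtain ⟨m, htm, hmr⟩ := exists_between hr
  have hnear : ∀ᶠ s in 𝓝[≥] t, h s < m :=
    ((hh t (Ico_subset_Icc_self ht)).mono_of_mem_nhdsWithin
      (Icc_mem_nhdsGE_of_mem ht)).eventually_lt_const htm
  obtain ⟨c, htc, hc⟩ := mem_nhdsGE_iff_exists_Ico_subset.1 hnear
  filter_upwards [Ioo_mem_nhdsGT (lt_min htc ht.2)] with z hz
  have hzb : z < b := hz.2.trans_le (min_le_right _ _)
  have hdist : dist (f z) (f t) ≤ m * (z - t) := by
    refine dist_le_of_ae_norm_deriv_le hz.1.le (hf.mono (Icc_subset_Icc ht.1 hzb.le)) ?_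
    filter_upwards [ae_restrict_of_ae_restrict_of_subset (Ioo_subset_Ioo ht.1 hzb.le) hfh,
      ae_restrict_mem measurableSet_Ioo] with s hsh hs
    exact hsh.trans (hc ⟨hs.1.le, hs.2.trans (hz.2.trans_le (min_le_left _ _))⟩).le
  rw [inv_mul_lt_iff₀ (sub_pos.2 hz.1), mul_comm]
  calc ‖f z‖ - ‖f t‖ ≤ dist (f z) (f t) := by
        rw [dist_eq_norm]
        exact norm_sub_norm_le _ _
    _ ≤ m * (z - t) := hdist
    _ < r * (z - t) := by
        gcongr
        exact sub_pos.2 hz.1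

lemma norm_le_gronwallBound_of_ae_norm_deriv_le {f : ℝ → G} {C : ℝ≥0} {a b K ε : ℝ}
    (hf : LipschitzOnWith C f (Icc a b))
    (hgrowth : ∀ᵐ s ∂volume.restrict (Ioo a b), ‖deriv f s‖ ≤ K * ‖f s‖ + ε) :
    ∀ t ∈ Icc a b, ‖f t‖ ≤ gronwallBound ‖f a‖ K ε (t - a) := by
  have hnorm : ContinuousOn (fun s ↦ ‖f s‖) (Icc a b) := hf.continuousOn.norm
  refine le_gronwallBound_of_liminf_deriv_right_le hnorm (fun t ht r hr ↦ ?_) le_rfl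
    fun _ _ ↦ le_rfl
  exact (eventually_slope_norm_lt_of_ae_norm_deriv_le hf (by fun_prop) hgrowth ht hr).frequently

end Gronwall

section VelocityEpigraph

variable {E W : Type*} [NormedAddCommGroup E] {f : E → W → E} {L : E → W → ℝ} {U : Set W}

/-- The epigraph of the cost as a function of the velocity at the state `ξ`: the velocities
available there, each paired with every cost at least that of a control producing it. It is the set
usually called the extended velocity set in existence theory for optimal control. -/
def velocityEpigraph (f : E → W → E) (L : E → W → ℝ) (U : Set W) (ξ : E) : Set (E × ℝ) :=
  {p | ∃ w ∈ U, f ξ w = p.1 ∧ L ξ w ≤ p.2}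

variable [TopologicalSpace W]

lemma isClosed_velocityEpigraph (hU : IsCompact U) {ξ : E} (hf : Continuous (f ξ))
    (hL : Continuous (L ξ)) : IsClosed (velocityEpigraph f L U ξ) := by
  have hsum : velocityEpigraph f L U ξ =
      (fun w ↦ (f ξ w, L ξ w)) '' U + ({0} : Set E) ×ˢ Ici (0 : ℝ) := by
    ext ⟨v, ℓ⟩
    simp only [Set.mem_add, exists_mem_image, Prod.exists, mem_prod, mem_singleton_iff, mem_Ici,
      Prod.mk_add_mk, Prod.mk.injEq]
    refine exists_congr fun w ↦ and_congr_right fun _ ↦ ⟨fun ⟨hv, hℓ⟩ ↦ ?_, ?_⟩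
    · exact ⟨0, ℓ - L ξ w, ⟨rfl, sub_nonneg.2 hℓ⟩, by rw [add_zero, hv], add_sub_cancel _ _⟩
    · rintro ⟨_, r, ⟨rfl, hr⟩, hv, hℓ⟩
      exact ⟨by rwa [add_zero] at hv, hℓ ▸ le_add_of_nonneg_right hr⟩
  rw [hsum]
  exact (isClosed_singleton.prod isClosed_Ici).add_left_of_isCompact
    (hU.image (hf.prodMk hL))

lemma eventually_velocityEpigraph_subset_cthickening (hU : IsCompact U) (hf : Continuous ↿f)
    (hL : Continuous ↿L) (ξ : E) {ε : ℝ} (hε : 0 < ε) :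
    ∀ᶠ ζ in 𝓝 ξ, velocityEpigraph f L U ζ ⊆ cthickening ε (velocityEpigraph f L U ξ) := by
  have hclose : ∀ᶠ ζ in 𝓝 ξ, ∀ w ∈ U, dist (f ζ w, L ζ w) (f ξ w, L ξ w) < ε := by
    refine hU.eventually_forall_of_forall_eventually fun w _ ↦ ?_
    have hcont : Continuous fun z : E × W ↦ dist (↿f z, ↿L z) (↿f (ξ, z.2), ↿L (ξ, z.2)) := by
      fun_prop
    exact hcont.continuousAt.eventually_lt_const (by simpa only [dist_self])
  filter_upwards [hclose] with ζ hζ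
  rintro ⟨v, ℓ⟩ ⟨w, hw, rfl, hℓ⟩
  refine mem_cthickening_of_dist_le _ (f ξ w, L ξ w + (ℓ - L ζ w)) _ _
    ⟨w, hw, rfl, le_add_of_nonneg_right (sub_nonneg.2 hℓ)⟩ (le_trans (le_of_eq ?_) (hζ w hw).le)
  rw [Prod.dist_eq, Prod.dist_eq, Real.dist_eq, Real.dist_eq]
  congr 2
  ring

lemma exists_measurable_control_of_mem_velocityEpigraph {α : Type*} [MeasurableSpace α]
    {E : Type*} [NormedAddCommGroup E] {f : E → ℝ → E} {L : E → ℝ → ℝ} {U : Set ℝ} {x : α → E}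
    {p : α → E × ℝ} (hU : IsCompact U) (hU₀ : U.Nonempty) (hf : Continuous ↿f)
    (hL : Continuous ↿L) (hx : StronglyMeasurable x) (hp : StronglyMeasurable p) :
    ∃ u : α → ℝ, Measurable u ∧ ∀ a, u a ∈ U ∧
      (p a ∈ velocityEpigraph f L U (x a) → f (x a) (u a) = (p a).1 ∧ L (x a) (u a) ≤ (p a).2) := by
  -- `w` realises `p a` iff its defect is nonpositive, so a measurable minimiser will do.
  let defect (a : α) (w : ℝ) : ℝ := max ‖f (x a) w - (p a).1‖ (L (x a) w - (p a).2)
  have hmeas : ∀ w ∈ U, Measurable fun a ↦ defect a w := by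
    intro w _
    have hfw : Continuous fun ξ ↦ f ξ w := by fun_prop
    have hLw : Continuous fun ξ ↦ L ξ w := by fun_prop
    exact (((hfw.comp_stronglyMeasurable hx).sub hp.fst).norm.sup
      ((hLw.comp_stronglyMeasurable hx).sub hp.snd)).measurable
  obtain ⟨u, hu, hmin⟩ :=
    exists_measurable_isMinOn hU hU₀ hmeas fun a ↦ Continuous.continuousOn (by fun_prop)
  refine ⟨u, hu, fun a ↦ ⟨(hmin a).1, fun ⟨w, hw, hfw, hLw⟩ ↦ ?_⟩⟩
  have hle : defect a (u a) ≤ 0 := ((hmin a).2 hw).trans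
    (max_le (by rw [hfw, sub_self, norm_zero]) (sub_nonpos.2 hLw))
  exact ⟨sub_eq_zero.1 (norm_le_zero_iff.1 ((le_max_left _ _).trans hle)),
    sub_nonpos.1 ((le_max_right _ _).trans hle)⟩

end VelocityEpigraph

/-- `(x, u)` is a Lipschitz trajectory on `[0, T]` of the control system `x' = f x u` with initial
state `x₀`, together with a measurable control taking values in `U`. -/
structure IsAdmissiblePair {E : Type*} [NormedAddCommGroup E] [NormedSpace ℝ E] (f : E → ℝ → E)
    (U : Set ℝ) (T : ℝ) (x₀ : E) (x : ℝ → E) (u : ℝ → ℝ) : Prop where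
  measurable_control : Measurable u
  control_mem : ∀ᵐ t ∂volume.restrict (Ioo 0 T), u t ∈ U
  exists_lipschitzOnWith : ∃ C : ℝ≥0, LipschitzOnWith C x (Icc 0 T)
  initial : x 0 = x₀
  hasDerivAt : ∀ᵐ t ∂volume.restrict (Ioo 0 T), HasDerivAt x (f (x t) (u t)) t

/-- The state together with the cost accumulated so far; this turns the cost functional into the
terminal value of a component of the trajectory. -/
noncomputable def augmentedTrajectory {E : Type*} (L : E → ℝ → ℝ) (x : ℝ → E) (u : ℝ → ℝ)
    (t : ℝ) : E × ℝ :=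
  (x t, ∫ s in 0..t, L (x s) (u s))

lemma augmentedTrajectory_snd {E : Type*} {L : E → ℝ → ℝ} {T : ℝ} (hT : 0 ≤ T) (x : ℝ → E)
    (u : ℝ → ℝ) : (augmentedTrajectory L x u T).2 = ∫ t in Ioo 0 T, L (x t) (u t) := by
  rw [augmentedTrajectory, intervalIntegral.integral_of_le hT, integral_Ioc_eq_integral_Ioo]

lemma integrableOn_comp_control {E : Type*} [TopologicalSpace E]
    [TopologicalSpace.PseudoMetrizableSpace E] {L : E → ℝ → ℝ} {U : Set ℝ} {a b : ℝ} {x : ℝ → E}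
    {u : ℝ → ℝ} (hU : IsCompact U) (hL : Continuous ↿L) (hx : ContinuousOn x (Icc a b))
    (hu : Measurable u) (huU : ∀ᵐ t ∂volume.restrict (Ioo a b), u t ∈ U) :
    IntegrableOn (fun t ↦ L (x t) (u t)) (Ioo a b) := by
  obtain ⟨C, hC⟩ := ((isCompact_Icc.image_of_continuousOn hx).prod
    hU).exists_bound_of_continuousOn hL.continuousOn
  have hxm : AEStronglyMeasurable x (volume.restrict (Ioo a b)) :=
    (hx.mono Ioo_subset_Icc_self).aestronglyMeasurable measurableSet_Ioo
  refine Integrable.of_bound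
    (hL.comp_aestronglyMeasurable (hxm.prodMk hu.aestronglyMeasurable)) C ?_
  filter_upwards [huU, ae_restrict_mem measurableSet_Ioo] with t htU ht
  exact hC (x t, u t) ⟨mem_image_of_mem _ (Ioo_subset_Icc_self ht), htU⟩

namespace IsAdmissiblePair

variable {E : Type*} [NormedAddCommGroup E] [NormedSpace ℝ E]
  {f : E → ℝ → E} {L : E → ℝ → ℝ} {U : Set ℝ} {T : ℝ} {x₀ : E} {x : ℝ → E} {u : ℝ → ℝ}

lemma integrableOn_cost (h : IsAdmissiblePair f U T x₀ x u) (hU : IsCompact U)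
    (hL : Continuous ↿L) : IntegrableOn (fun t ↦ L (x t) (u t)) (Ioo 0 T) := by
  obtain ⟨C, hC⟩ := h.exists_lipschitzOnWith
  exact integrableOn_comp_control hU hL hC.continuousOn h.measurable_control h.control_mem

lemma augmentedTrajectory_zero (h : IsAdmissiblePair f U T x₀ x u) :
    augmentedTrajectory L x u 0 = (x₀, 0) := by
  rw [augmentedTrajectory, h.initial, intervalIntegral.integral_same]

lemma hasDerivAt_augmentedTrajectory (h : IsAdmissiblePair f U T x₀ x u) (hU : IsCompact U)
    (hL : Continuous ↿L) (hT : 0 ≤ T) :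
    ∀ᵐ t ∂volume.restrict (Ioo 0 T),
      HasDerivAt (augmentedTrajectory L x u) (f (x t) (u t), L (x t) (u t)) t := by
  have hint : IntervalIntegrable (fun t ↦ L (x t) (u t)) volume 0 T :=
    (intervalIntegrable_iff_integrableOn_Ioo_of_le hT).2 (h.integrableOn_cost hU hL)
  filter_upwards [h.hasDerivAt, ae_restrict_mem measurableSet_Ioo,
    ae_restrict_of_ae hint.ae_hasDerivAt_integral] with t hx ht hz
  rw [uIcc_of_le hT] at hz
  exact hx.prodMk (hz (Ioo_subset_Icc_self ht) 0 (left_mem_Icc.2 hT))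

lemma deriv_augmentedTrajectory_mem (h : IsAdmissiblePair f U T x₀ x u) (hU : IsCompact U)
    (hL : Continuous ↿L) (hT : 0 ≤ T) :
    ∀ᵐ t ∂volume.restrict (Ioo 0 T),
      deriv (augmentedTrajectory L x u) t ∈ velocityEpigraph f L U (x t) := by
  filter_upwards [h.hasDerivAt_augmentedTrajectory hU hL hT, h.control_mem] with t ht htU
  rw [ht.deriv]
  exact ⟨u t, htU, rfl, le_rfl⟩

variable [FiniteDimensional ℝ E] {K M : ℝ≥0}

lemma norm_le (h : IsAdmissiblePair f U T x₀ x u)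
    (hgrowth : ∀ ξ, ∀ w ∈ U, ‖f ξ w‖ ≤ K * ‖ξ‖ + M) :
    ∀ t ∈ Icc 0 T, ‖x t‖ ≤ gronwallBound ‖x₀‖ K M T := by
  obtain ⟨C, hC⟩ := h.exists_lipschitzOnWith
  intro t ht
  have hderiv : ∀ᵐ s ∂volume.restrict (Ioo 0 T), ‖deriv x s‖ ≤ K * ‖x s‖ + M := by
    filter_upwards [h.hasDerivAt, h.control_mem] with s hs hsU
    rw [hs.deriv]
    exact hgrowth _ _ hsU
  have hbound := norm_le_gronwallBound_of_ae_norm_deriv_le hC hderiv t ht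
  rw [h.initial, sub_zero] at hbound
  exact hbound.trans (gronwallBound_mono (norm_nonneg _) M.coe_nonneg K.coe_nonneg ht.2)

lemma exists_lipschitzOnWith_augmentedTrajectory (hU : IsCompact U) (hf : Continuous ↿f)
    (hL : Continuous ↿L) (hgrowth : ∀ ξ, ∀ w ∈ U, ‖f ξ w‖ ≤ K * ‖ξ‖ + M) (hT : 0 ≤ T) (x₀ : E) :
    ∃ C : ℝ≥0, ∀ x u, IsAdmissiblePair f U T x₀ x u →
      LipschitzOnWith C (augmentedTrajectory L x u) (Icc 0 T) := by
  have := FiniteDimensional.proper_real E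
  obtain ⟨B, hB⟩ := ((isCompact_closedBall (0 : E) (gronwallBound ‖x₀‖ K M T)).prod
    hU).exists_bound_of_continuousOn (hf.prodMk hL).continuousOn
  refine ⟨max B.toNNReal B.toNNReal, fun x u h ↦ ?_⟩
  obtain ⟨C, hC⟩ := h.exists_lipschitzOnWith
  have hbound : ∀ᵐ t ∂volume.restrict (Ioo 0 T),
      ‖(f (x t) (u t), L (x t) (u t))‖ ≤ B.toNNReal := by
    filter_upwards [h.control_mem, ae_restrict_mem measurableSet_Ioo] with t htU ht
    exact (hB (x t, u t) ⟨mem_closedBall_zero_iff.2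
      (h.norm_le hgrowth t (Ioo_subset_Icc_self ht)), htU⟩).trans (Real.le_coe_toNNReal B)
  refine (lipschitzOnWith_of_ae_norm_deriv_le hC ?_).prodMk (lipschitzOnWith_integral
    ((intervalIntegrable_iff_integrableOn_Ioo_of_le hT).2 (h.integrableOn_cost hU hL)) ?_)
  · filter_upwards [h.hasDerivAt, hbound] with t ht htB
    exact ht.deriv ▸ (norm_fst_le _).trans htB
  · exact hbound.mono fun t ht ↦ (norm_snd_le _).trans ht

end IsAdmissiblePair

section ExistenceOfOptimalControl

variable {E : Type*} [NormedAddCommGroup E] [NormedSpace ℝ E]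
  {f : E → ℝ → E} {L : E → ℝ → ℝ} {U : Set ℝ} {T : ℝ} {x₀ : E}

/-- The values of the cost functional along admissible pairs; its infimum is the value of the
optimal control problem. -/
def attainableCosts (f : E → ℝ → E) (L : E → ℝ → ℝ) (U : Set ℝ) (T : ℝ) (x₀ : E) : Set ℝ :=
  {J | ∃ x u, IsAdmissiblePair f U T x₀ x u ∧ ∫ t in Ioo 0 T, L (x t) (u t) = J}

variable [FiniteDimensional ℝ E] {K M : ℝ≥0}

lemma exists_deriv_mem_velocityEpigraph_of_tendsto (hU : IsCompact U) (hf : Continuous ↿f)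
    (hL : Continuous ↿L) (hgrowth : ∀ ξ, ∀ w ∈ U, ‖f ξ w‖ ≤ K * ‖ξ‖ + M) (hT : 0 ≤ T)
    (hconv : ∀ ξ, Convex ℝ (velocityEpigraph f L U ξ)) {x : ℕ → ℝ → E} {u : ℕ → ℝ → ℝ} {m : ℝ}
    (hadm : ∀ n, IsAdmissiblePair f U T x₀ (x n) (u n))
    (hm : Tendsto (fun n ↦ ∫ t in Ioo 0 T, L (x n t) (u n t)) atTop (𝓝 m)) :
    ∃ y : ℝ → E × ℝ, (∃ C : ℝ≥0, LipschitzWith C y) ∧ y 0 = (x₀, 0) ∧ (y T).2 = m ∧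
      ∀ᵐ t ∂volume.restrict (Ioo 0 T), deriv y t ∈ velocityEpigraph f L U (y t).1 := by
  have := FiniteDimensional.proper_real E
  obtain ⟨C, hC⟩ :=
    IsAdmissiblePair.exists_lipschitzOnWith_augmentedTrajectory hU hf hL hgrowth hT x₀
  obtain ⟨φ, y, hφ, hyC, hy⟩ := exists_subseq_tendstoUniformlyOn_of_lipschitzOnWith (R := 0)
    (x₀ := (x₀, (0 : ℝ))) hT (fun n ↦ hC _ _ (hadm n))
    fun n ↦ by rw [(hadm n).augmentedTrajectory_zero, dist_self]
  have hlim : ∀ t ∈ Icc 0 T,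
      Tendsto (fun n ↦ augmentedTrajectory L (x (φ n)) (u (φ n)) t) atTop (𝓝 (y t)) :=
    fun t ht ↦ hy.tendsto_at ht
  refine ⟨y, ⟨C, hyC⟩, ?_, ?_, ?_⟩
  · refine tendsto_nhds_unique (hlim 0 (left_mem_Icc.2 hT)) ?_
    simp only [(hadm _).augmentedTrajectory_zero, tendsto_const_nhds]
  · refine tendsto_nhds_unique (hlim T (right_mem_Icc.2 hT)).snd_nhds ?_
    simp only [augmentedTrajectory_snd hT]
    exact hm.comp hφ.tendsto_atTop
  · filter_upwards [ae_hasDerivAt_deriv_of_lipschitzOnWith (a := 0) (b := T) hyC.lipschitzOnWith,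
      ae_restrict_mem measurableSet_Ioo] with t hderiv ht
    refine hasDerivAt_mem_of_tendsto (F := fun p ↦ velocityEpigraph f L U p.1) (hconv _)
      (isClosed_velocityEpigraph hU (by fun_prop) (by fun_prop))
      (fun ε hε ↦ continuous_fst.continuousAt.eventually
        (eventually_velocityEpigraph_subset_cthickening hU hf hL _ hε))
      (fun n ↦ hC _ _ (hadm (φ n)))
      (fun n ↦ (hadm (φ n)).deriv_augmentedTrajectory_mem hU hL hT) hlim ht hderiv

lemma bddBelow_attainableCosts (hU : IsCompact U) (hf : Continuous ↿f) (hL : Continuous ↿L)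
    (hgrowth : ∀ ξ, ∀ w ∈ U, ‖f ξ w‖ ≤ K * ‖ξ‖ + M) (hT : 0 ≤ T) (x₀ : E) :
    BddBelow (attainableCosts f L U T x₀) := by
  obtain ⟨C, hC⟩ :=
    IsAdmissiblePair.exists_lipschitzOnWith_augmentedTrajectory hU hf hL hgrowth hT x₀
  refine ⟨-(C * T), ?_⟩
  rintro _ ⟨x, u, h, rfl⟩
  have hdist := (hC x u h).dist_le_mul T (right_mem_Icc.2 hT) 0 (left_mem_Icc.2 hT)
  rw [Real.dist_0_eq_abs, abs_of_nonneg hT, h.augmentedTrajectory_zero, dist_eq_norm] at hdist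
  have hsnd := (norm_snd_le _).trans hdist
  rw [Prod.snd_sub, sub_zero, augmentedTrajectory_snd hT] at hsnd
  exact (abs_le.1 hsnd).1

lemma exists_isAdmissiblePair_of_deriv_mem_velocityEpigraph {y : ℝ → E × ℝ} {C : ℝ≥0}
    (hU : IsCompact U) (hU₀ : U.Nonempty) (hf : Continuous ↿f) (hL : Continuous ↿L) (hT : 0 ≤ T)
    (hy : LipschitzWith C y)
    (hyF : ∀ᵐ t ∂volume.restrict (Ioo 0 T), deriv y t ∈ velocityEpigraph f L U (y t).1) :
    ∃ u, IsAdmissiblePair f U T (y 0).1 (fun t ↦ (y t).1) u ∧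
      ∫ t in Ioo 0 T, L (y t).1 (u t) ≤ (y T).2 - (y 0).2 := by
  obtain ⟨u, hu, huU⟩ := exists_measurable_control_of_mem_velocityEpigraph hU hU₀ hf hL
    hy.continuous.fst.stronglyMeasurable (stronglyMeasurable_deriv y)
  have hderiv : ∀ᵐ t ∂volume.restrict (Ioo 0 T), HasDerivAt y (deriv y t) t :=
    ae_hasDerivAt_deriv_of_lipschitzOnWith hy.lipschitzOnWith
  have hadm : IsAdmissiblePair f U T (y 0).1 (fun t ↦ (y t).1) u := by
    refine ⟨hu, .of_forall fun t ↦ (huU t).1,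
      ⟨1 * C, (LipschitzWith.prod_fst.comp hy).lipschitzOnWith⟩, rfl, ?_⟩
    filter_upwards [hyF, hderiv] with t ht hd
    rw [((huU t).2 ht).1]
    exact hasFDerivAt_fst.comp_hasDerivAt t hd
  have hy₂ : LipschitzOnWith (1 * C) (fun t ↦ (y t).2) (Icc 0 T) :=
    (LipschitzWith.prod_snd.comp hy).lipschitzOnWith
  refine ⟨u, hadm, ?_⟩
  rw [← integral_deriv_eq_sub_of_lipschitzOnWith hT hy₂, intervalIntegral.integral_of_le hT,
    integral_Ioc_eq_integral_Ioo]
  refine setIntegral_mono_ae_restrict (hadm.integrableOn_cost hU hL)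
    ((intervalIntegrable_iff_integrableOn_Ioo_of_le hT).1
      (intervalIntegrable_deriv_of_lipschitzOnWith hT hy₂)) ?_
  filter_upwards [hyF, hderiv] with t ht hd
  exact (hasFDerivAt_snd.comp_hasDerivAt t hd).deriv ▸ ((huU t).2 ht).2

/-- The **Filippov–Cesari existence theorem**. -/
theorem exists_isAdmissiblePair_forall_cost_le (hU : IsCompact U) (hf : Continuous ↿f)
    (hL : Continuous ↿L) (hgrowth : ∀ ξ, ∀ w ∈ U, ‖f ξ w‖ ≤ K * ‖ξ‖ + M)
    (hconv : ∀ ξ, Convex ℝ (velocityEpigraph f L U ξ)) (hT : 0 ≤ T) (hU₀ : U.Nonempty)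
    (hfeasible : ∃ x u, IsAdmissiblePair f U T x₀ x u) :
    ∃ x u, IsAdmissiblePair f U T x₀ x u ∧ ∀ y v, IsAdmissiblePair f U T x₀ y v →
      ∫ t in Ioo 0 T, L (x t) (u t) ≤ ∫ t in Ioo 0 T, L (y t) (v t) := by
  have hbdd := bddBelow_attainableCosts hU hf hL hgrowth hT x₀
  have hne : (attainableCosts f L U T x₀).Nonempty :=
    hfeasible.elim fun x ⟨u, h⟩ ↦ ⟨_, x, u, h, rfl⟩
  obtain ⟨J, -, hJ, hJmem⟩ := exists_seq_tendsto_sInf hne hbdd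
  choose x u hadm hcost using hJmem
  obtain rfl : (fun n ↦ ∫ t in Ioo 0 T, L (x n t) (u n t)) = J := funext hcost
  obtain ⟨y, ⟨C, hyC⟩, hy₀, hyT, hyF⟩ :=
    exists_deriv_mem_velocityEpigraph_of_tendsto hU hf hL hgrowth hT hconv hadm hJ
  obtain ⟨v, hv, hvcost⟩ :=
    exists_isAdmissiblePair_of_deriv_mem_velocityEpigraph hU hU₀ hf hL hT hyC hyF
  rw [hy₀] at hv hvcost
  refine ⟨_, v, hv, fun z w hz ↦ ?_⟩
  calc ∫ t in Ioo 0 T, L (y t).1 (v t) ≤ (y T).2 := by simpa only [sub_zero] using hvcost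
    _ ≤ ∫ t in Ioo 0 T, L (z t) (w t) := by
      rw [hyT]
      exact csInf_le hbdd ⟨z, w, hz, rfl⟩

end ExistenceOfOptimalControl

section GlobalExistence

variable {G : Type*} [NormedAddCommGroup G] [NormedSpace ℝ G] {F : G → G} {K : ℝ≥0}

lemma exists_hasDerivWithinAt_Icc_of_eq {α γ : ℝ → G} {a b c : ℝ} (hab : a ≤ b) (hbc : b ≤ c)
    (hα : ∀ t ∈ Icc a b, HasDerivWithinAt α (F (α t)) (Icc a b) t)
    (hγ : ∀ t ∈ Icc b c, HasDerivWithinAt γ (F (γ t)) (Icc b c) t) (hαγ : α b = γ b) :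
    ∃ δ : ℝ → G, δ a = α a ∧ ∀ t ∈ Icc a c, HasDerivWithinAt δ (F (δ t)) (Icc a c) t := by
  let δ (t : ℝ) : G := if t ≤ b then α t else γ t
  have hδα : EqOn δ α (Icc a b) := fun t ht ↦ if_pos ht.2
  have hδγ : EqOn δ γ (Icc b c) := fun t ht ↦ by
    rcases ht.1.eq_or_lt with rfl | hbt
    · exact (if_pos le_rfl).trans hαγ
    · exact if_neg hbt.not_ge
  have hglue {φ : ℝ → G} {s t : ℝ} (hφ : ∀ r ∈ Icc s t, HasDerivWithinAt φ (F (φ r)) (Icc s t) r)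
      (hδφ : EqOn δ φ (Icc s t)) (r : ℝ) : HasDerivWithinAt δ (F (δ r)) (Icc s t) r := by
    by_cases hr : r ∈ Icc s t
    · exact hδφ hr ▸ (hφ r hr).congr hδφ (hδφ hr)
    · exact HasFDerivWithinAt.of_notMem_closure (by rwa [closure_Icc])
  refine ⟨δ, hδα (left_mem_Icc.2 hab), fun t _ ↦ ?_⟩
  rw [← Icc_union_Icc_eq_Icc hab hbc]
  exact (hglue hα hδα t).union (hglue hγ hδγ t)

variable [CompleteSpace G]

lemma exists_hasDerivWithinAt_Icc_of_lipschitzWith_of_mul_le (hF : LipschitzWith K F) {h : ℝ≥0}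
    (hKh : K * h ≤ 1 / 2) (a : ℝ) (x₀ : G) :
    ∃ α : ℝ → G, α a = x₀ ∧
      ∀ t ∈ Icc a (a + h), HasDerivWithinAt α (F (α t)) (Icc a (a + h)) t := by
  let R : ℝ≥0 := 2 * ‖F x₀‖₊ * h
  have hbound : ∀ x ∈ closedBall x₀ R, ‖F x‖ ≤ ‖F x₀‖₊ + K * R := by
    intro x hx
    calc ‖F x‖ ≤ ‖F x₀‖ + ‖F x - F x₀‖ := norm_le_norm_add_norm_sub' _ _
      _ ≤ ‖F x₀‖ + K * R := by
        rw [← dist_eq_norm]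
        gcongr
        exact (hF.dist_le_mul x x₀).trans (mul_le_mul_of_nonneg_left hx K.coe_nonneg)
  have hstay : ((‖F x₀‖₊ + K * R : ℝ≥0) : ℝ) * max (a + h - a) (a - a) ≤ R - (0 : ℝ≥0) := by
    have hR : ‖F x₀‖ * h + K * h * R ≤ ‖F x₀‖ * h + 1 / 2 * R := by
      gcongr
      exact_mod_cast hKh
    rw [add_sub_cancel_left, sub_self, max_eq_left h.coe_nonneg]
    push_cast [R] at hR ⊢
    linarith
  exact (IsPicardLindelof.of_time_independent (t₀ := ⟨a, left_mem_Icc.2 (by simp)⟩) (r := 0)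
    hbound hF.lipschitzOnWith hstay).exists_eq_forall_mem_Icc_hasDerivWithinAt₀

lemma exists_hasDerivWithinAt_Icc_of_lipschitzWith (hF : LipschitzWith K F) (a b : ℝ) (x₀ : G) :
    ∃ α : ℝ → G, α a = x₀ ∧ ∀ t ∈ Icc a b, HasDerivWithinAt α (F (α t)) (Icc a b) t := by
  obtain ⟨h, hh, hKh⟩ : ∃ h : ℝ≥0, 0 < h ∧ K * h ≤ 1 / 2 :=
    ⟨1 / 2 / (K + 1), by positivity, by
      rw [← mul_div_assoc, mul_comm, mul_div_assoc]
      exact mul_le_of_le_one_right' (div_le_one_of_le₀ le_self_add zero_le)⟩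
  have hsteps : ∀ n : ℕ, ∃ α : ℝ → G, α a = x₀ ∧
      ∀ t ∈ Icc a (a + n * h), HasDerivWithinAt α (F (α t)) (Icc a (a + n * h)) t := by
    intro n
    induction n with
    | zero => simpa using
        exists_hasDerivWithinAt_Icc_of_lipschitzWith_of_mul_le hF (h := 0) (by simp) a x₀
    | succ n ih =>
      obtain ⟨α, hα₀, hα⟩ := ih
      obtain ⟨γ, hγ₀, hγ⟩ :=
        exists_hasDerivWithinAt_Icc_of_lipschitzWith_of_mul_le hF hKh (a + n * h) (α (a + n * h))
      have hend : a + (n + 1 : ℕ) * (h : ℝ) = a + n * h + h := by push_cast; ring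
      rw [hend]
      exact hα₀ ▸ exists_hasDerivWithinAt_Icc_of_eq (le_add_of_nonneg_right (by positivity))
        (le_add_of_nonneg_right h.coe_nonneg) hα hγ hγ₀.symm
  obtain ⟨n, hn⟩ := exists_nat_ge ((b - a) / h)
  obtain ⟨α, hα₀, hα⟩ := hsteps n
  have hb : b ≤ a + n * h := by rwa [div_le_iff₀ (by exact_mod_cast hh), sub_le_iff_le_add'] at hn
  exact ⟨α, hα₀, fun t ht ↦ (hα t (Icc_subset_Icc_right hb ht)).mono (Icc_subset_Icc_right hb)⟩

end GlobalExistence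

section LipschitzDynamics

lemma exists_forall_norm_le_of_lipschitzWith {E W : Type*} [NormedAddCommGroup E]
    [TopologicalSpace W] {f : E → W → E} {U : Set W} {K : ℝ≥0} (hU : IsCompact U)
    (hf₀ : ContinuousOn (f 0) U) (hf : ∀ w ∈ U, LipschitzWith K fun ξ ↦ f ξ w) :
    ∃ M : ℝ≥0, ∀ ξ, ∀ w ∈ U, ‖f ξ w‖ ≤ K * ‖ξ‖ + M := by
  obtain ⟨M, hM⟩ := hU.exists_bound_of_continuousOn hf₀
  refine ⟨M.toNNReal, fun ξ w hw ↦ ?_⟩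
  calc ‖f ξ w‖ ≤ ‖f ξ w - f 0 w‖ + ‖f 0 w‖ := norm_le_norm_sub_add _ _
    _ ≤ K * ‖ξ‖ + M.toNNReal := by
      gcongr
      · simpa only [dist_eq_norm, sub_zero] using (hf w hw).dist_le_mul ξ 0
      · exact (hM w hw).trans (Real.le_coe_toNNReal M)

variable {E : Type*} [NormedAddCommGroup E] [NormedSpace ℝ E]
  {f : E → ℝ → E} {L : E → ℝ → ℝ} {U : Set ℝ} {T : ℝ} {K : ℝ≥0}

lemma exists_isAdmissiblePair_const [CompleteSpace E] {w : ℝ} (hw : w ∈ U)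
    (hf : LipschitzWith K fun ξ ↦ f ξ w) (T : ℝ) (x₀ : E) :
    ∃ x, IsAdmissiblePair f U T x₀ x fun _ ↦ w := by
  obtain ⟨x, hx₀, hx⟩ := exists_hasDerivWithinAt_Icc_of_lipschitzWith hf 0 T x₀
  have hcont : ContinuousOn x (Icc 0 T) := fun t ht ↦ (hx t ht).continuousWithinAt
  obtain ⟨B, hB⟩ := isCompact_Icc.exists_bound_of_continuousOn
    (hf.continuous.comp_continuousOn hcont)
  refine ⟨x, measurable_const, .of_forall fun _ ↦ hw, ⟨B.toNNReal, ?_⟩, hx₀, ?_⟩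
  · exact (convex_Icc 0 T).lipschitzOnWith_of_nnnorm_hasDerivWithin_le hx fun t ht ↦
      NNReal.coe_le_coe.1 ((hB t ht).trans (Real.le_coe_toNNReal B))
  · filter_upwards [ae_restrict_mem measurableSet_Ioo] with t ht
    exact (hx t (Ioo_subset_Icc_self ht)).hasDerivAt (Icc_mem_nhds ht.1 ht.2)

theorem exists_isAdmissiblePair_forall_cost_le_of_lipschitzWith [FiniteDimensional ℝ E]
    (hU : IsCompact U) (hU₀ : U.Nonempty) (hf : Continuous ↿f) (hL : Continuous ↿L)
    (hfK : ∀ w ∈ U, LipschitzWith K fun ξ ↦ f ξ w)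
    (hconv : ∀ ξ, Convex ℝ (velocityEpigraph f L U ξ)) (hT : 0 ≤ T) (x₀ : E) :
    ∃ x u, IsAdmissiblePair f U T x₀ x u ∧ ∀ y v, IsAdmissiblePair f U T x₀ y v →
      ∫ t in Ioo 0 T, L (x t) (u t) ≤ ∫ t in Ioo 0 T, L (y t) (v t) := by
  have := FiniteDimensional.complete ℝ E
  obtain ⟨M, hM⟩ := exists_forall_norm_le_of_lipschitzWith hU (by fun_prop) hfK
  obtain ⟨w, hw⟩ := hU₀
  obtain ⟨x, hx⟩ := exists_isAdmissiblePair_const hw (hfK w hw) T x₀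
  exact exists_isAdmissiblePair_forall_cost_le hU hf hL hM hconv hT ⟨w, hw⟩ ⟨x, _, hx⟩

end LipschitzDynamics

section ScalarDynamics

lemma convex_velocityEpigraph_of_isPreconnected {W : Type*} [TopologicalSpace W]
    {f L : ℝ → W → ℝ} {U : Set W} {ξ : ℝ} (hU : IsPreconnected U) (hf : ContinuousOn (f ξ) U)
    (hL : ∀ r ∈ U, ∀ v ∈ U, ∀ w ∈ U, ∀ p q : ℝ, 0 ≤ p → 0 ≤ q → p + q = 1 →
      f ξ r = p * f ξ v + q * f ξ w → L ξ r ≤ p * L ξ v + q * L ξ w) :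
    Convex ℝ (velocityEpigraph f L U ξ) := by
  have hvel : Convex ℝ (f ξ '' U) := (hU.image _ hf).ordConnected.convex
  rintro ⟨_, j⟩ ⟨v, hv, rfl, hj⟩ ⟨_, k⟩ ⟨w, hw, rfl, hk⟩ p q hp hq hpq
  obtain ⟨r, hr, hfr⟩ := hvel (mem_image_of_mem _ hv) (mem_image_of_mem _ hw) hp hq hpq
  refine ⟨r, hr, hfr, (hL r hr v hv w hw p q hp hq hpq hfr).trans ?_⟩
  simp only [Prod.snd_add, Prod.smul_snd, smul_eq_mul]
  gcongr

lemma mul_sq_add_mul_sq_le_sq {A r v w p q : ℝ} (hA : 0 ≤ A) (hr : 0 ≤ r) (hv : 0 ≤ v)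
    (hw : 0 ≤ w) (hp : 0 ≤ p) (hq : 0 ≤ q) (hpq : p + q = 1)
    (heq : A * r ^ 2 + r ^ 3 = p * (A * v ^ 2 + v ^ 3) + q * (A * w ^ 2 + w ^ 3)) :
    p * v ^ 2 + q * w ^ 2 ≤ r ^ 2 := by
  let ψ (s : ℝ) : ℝ := A * s + s ^ (3 / 2 : ℝ)
  have hψ_sq {z : ℝ} (hz : 0 ≤ z) : ψ (z ^ 2) = A * z ^ 2 + z ^ 3 := by
    simp only [ψ]
    rw [← Real.rpow_natCast_mul hz, ← Real.rpow_natCast z 3]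
    norm_num
  have hψ_convex : ConvexOn ℝ (Ici 0) ψ :=
    ((convexOn_id (convex_Ici 0)).smul hA).add (convexOn_rpow (by norm_num))
  have hψ_mono : StrictMonoOn ψ (Ici 0) :=
    ((monotone_id.const_mul hA).monotoneOn _).add_strictMono
      (Real.strictMonoOn_rpow_Ici_of_exponent_pos (by norm_num))
  rw [← hψ_mono.le_iff_le (show 0 ≤ p * v ^ 2 + q * w ^ 2 by positivity) (sq_nonneg r)]
  calc ψ (p * v ^ 2 + q * w ^ 2) ≤ p * ψ (v ^ 2) + q * ψ (w ^ 2) :=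
        hψ_convex.2 (sq_nonneg v) (sq_nonneg w) hp hq hpq
    _ = ψ (r ^ 2) := by rw [hψ_sq hv, hψ_sq hw, hψ_sq hr, heq]

lemma convex_velocityEpigraph_sq_add_pow_three {c β : ℝ → ℝ} {a b ξ : ℝ} (ha : 0 ≤ a)
    (hβ : β ξ ≤ 0) (hβc : β ξ ≤ c ξ) :
    Convex ℝ (velocityEpigraph (fun ξ w ↦ (c ξ - β ξ) * w ^ 2 + w ^ 3)
      (fun ξ w ↦ c ξ * w ^ 2 + w ^ 3) (Icc a b) ξ) := by
  refine convex_velocityEpigraph_of_isPreconnected isPreconnected_Icc (by fun_prop) ?_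
  intro r hr v hv w hw p q hp hq hpq hvel
  have hsq := mul_sq_add_mul_sq_le_sq (sub_nonneg.2 hβc) (ha.trans hr.1) (ha.trans hv.1)
    (ha.trans hw.1) hp hq hpq hvel
  calc c ξ * r ^ 2 + r ^ 3 = ((c ξ - β ξ) * r ^ 2 + r ^ 3) + β ξ * r ^ 2 := by ring
    _ ≤ (p * ((c ξ - β ξ) * v ^ 2 + v ^ 3) + q * ((c ξ - β ξ) * w ^ 2 + w ^ 3)) +
          β ξ * (p * v ^ 2 + q * w ^ 2) :=
        add_le_add hvel.le (mul_le_mul_of_nonpos_left hsq hβ)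
    _ = p * (c ξ * v ^ 2 + v ^ 3) + q * (c ξ * w ^ 2 + w ^ 3) := by ring

lemma lipschitzWith_mul_sq_add_pow_three {A : ℝ → ℝ} {K : ℝ≥0} (hA : LipschitzWith K A) {b w : ℝ}
    (hw : |w| ≤ b) :
    LipschitzWith (K * (b ^ 2).toNNReal) fun ξ ↦ A ξ * w ^ 2 + w ^ 3 := by
  refine LipschitzWith.of_dist_le_mul fun ξ ζ ↦ ?_
  rw [dist_add_right, Real.dist_eq, ← sub_mul, abs_mul, abs_sq, NNReal.coe_mul,
    Real.coe_toNNReal _ (sq_nonneg b), mul_right_comm]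
  exact mul_le_mul (hA.dist_le_mul ξ ζ) (sq_le_sq' (abs_le.1 hw).1 (abs_le.1 hw).2) (sq_nonneg w)
    (by positivity)

end ScalarDynamics

theorem stmt_17_general {T a b : ℝ} (hT : 0 ≤ T) (ha : 0 ≤ a) (hab : a ≤ b) (x₀ : ℝ)
    {c β : ℝ → ℝ} {K : ℝ≥0} (hc : Continuous c) (hcβ : LipschitzWith K fun ξ ↦ c ξ - β ξ)
    (hβ : ∀ ξ, β ξ ≤ 0) (hβc : ∀ ξ, β ξ ≤ c ξ) :
    ∃ x u, IsAdmissiblePair (fun ξ w ↦ (c ξ - β ξ) * w ^ 2 + w ^ 3) (Icc a b) T x₀ x u ∧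
      ∀ y v, IsAdmissiblePair (fun ξ w ↦ (c ξ - β ξ) * w ^ 2 + w ^ 3) (Icc a b) T x₀ y v →
        ∫ t in Ioo 0 T, (c (x t) * u t ^ 2 + u t ^ 3) ≤
          ∫ t in Ioo 0 T, (c (y t) * v t ^ 2 + v t ^ 3) := by
  have hβ_cont : Continuous β := (hc.sub hcβ.continuous).congr fun ξ ↦ sub_sub_cancel _ _
  have hvel_cont : Continuous ↿fun ξ w : ℝ ↦ (c ξ - β ξ) * w ^ 2 + w ^ 3 := by
    dsimp only [Function.HasUncurry.uncurry, id]
    fun_prop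
  have hcost_cont : Continuous ↿fun ξ w : ℝ ↦ c ξ * w ^ 2 + w ^ 3 := by
    dsimp only [Function.HasUncurry.uncurry, id]
    fun_prop
  exact exists_isAdmissiblePair_forall_cost_le_of_lipschitzWith
    (L := fun ξ w ↦ c ξ * w ^ 2 + w ^ 3) isCompact_Icc (nonempty_Icc.2 hab) hvel_cont hcost_cont
    (fun w hw ↦ lipschitzWith_mul_sq_add_pow_three hcβ
      ((abs_of_nonneg (ha.trans hw.1)).trans_le hw.2))
    (fun ξ ↦ convex_velocityEpigraph_sq_add_pow_three ha (hβ ξ) (hβc ξ)) hT x₀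

theorem stmt_17
    (T : ℝ) (hT : 0 < T) (x0 : ℝ)
    (c β : ℝ → ℝ)
    (hc : ∃ Lc : NNReal, LipschitzWith Lc c)
    (hβ : ∃ Lβ : NNReal, LipschitzWith Lβ β)
    (hβc : ∀ x : ℝ, β x < min 0 (c x)) :
    ∃ (x : ℝ → ℝ) (u : ℝ → ℝ),
      (Measurable u ∧ (∀ᵐ t ∂(volume.restrict (Set.Ioo 0 T)), u t ∈ Set.Icc (1:ℝ) 2) ∧
       (∃ Lx : NNReal, LipschitzOnWith Lx x (Set.Icc 0 T)) ∧ x 0 = x0 ∧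
       (∀ᵐ t ∂(volume.restrict (Set.Ioo 0 T)),
          HasDerivAt x ((c (x t) - β (x t)) * (u t) ^ 2 + (u t) ^ 3) t)) ∧
      ∀ (y : ℝ → ℝ) (v : ℝ → ℝ),
        (Measurable v ∧ (∀ᵐ t ∂(volume.restrict (Set.Ioo 0 T)), v t ∈ Set.Icc (1:ℝ) 2) ∧
         (∃ Ly : NNReal, LipschitzOnWith Ly y (Set.Icc 0 T)) ∧ y 0 = x0 ∧
         (∀ᵐ t ∂(volume.restrict (Set.Ioo 0 T)),
            HasDerivAt y ((c (y t) - β (y t)) * (v t) ^ 2 + (v t) ^ 3) t)) →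
        (∫ t in Set.Ioo 0 T, (c (x t) * (u t) ^ 2 + (u t) ^ 3)) ≤
          (∫ t in Set.Ioo 0 T, (c (y t) * (v t) ^ 2 + (v t) ^ 3)) := by
  obtain ⟨Lc, hLc⟩ := hc
  obtain ⟨Lβ, hLβ⟩ := hβ
  obtain ⟨x, u, hxu, hmin⟩ := stmt_17_general hT.le zero_le_one one_le_two x0 hLc.continuous
    (hLc.sub hLβ) (fun ξ ↦ ((hβc ξ).trans_le (min_le_left _ _)).le)
    fun ξ ↦ ((hβc ξ).trans_le (min_le_right _ _)).le
  exact ⟨x, u, ⟨hxu.1, hxu.2, hxu.3, hxu.4, hxu.5⟩,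
    fun y v ⟨hv, hvU, hy, hy₀, hyv⟩ ↦ hmin y v ⟨hv, hvU, hy, hy₀, hyv⟩⟩
end
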